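/- Let (G_n) be a sequence of connected d-regular simple graphs on n vertices with d = d(n) → ∞ and parameters ε = ε(n) ∈ (0,1) with ε(n)·log d → ∞, satisfying properties P1, P2 and P3. Let t* = n·ln d. Then for any sequence of starting vertices u = u(n), any t = t(n) with t ≥ (1+ε)t*, and every constant δ > 0, the probability that the subgraph of G_n induced by the vertices not visited by the first t steps of the simple random walk started at u contains a connected component with at least δ·log n vertices tends to 0 as n → ∞. -/

import Mathlib

open Finset Filter

noncomputable section
open scoped Classical

variable {V : Type*} [Fintype V] [DecidableEq V]

/-- Transition matrix of the simple random walk on a `d`-regular graph `G`: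
from `u` the walk moves to a uniformly random neighbour. -/
def simpleStep (G : SimpleGraph V) (d : ℕ) : Matrix V V ℝ :=
  Matrix.of fun u v => if G.Adj u v then ((d : ℝ))⁻¹ else 0

/-- Transition matrix of the lazy random walk `M = (1/2)(I + A/d)`. -/
def lazyStep (G : SimpleGraph V) (d : ℕ) : Matrix V V ℝ :=
  Matrix.of fun u v =>
    (if u = v then (2 : ℝ)⁻¹ else 0) + (2 : ℝ)⁻¹ * (if G.Adj u v then ((d : ℝ))⁻¹ else 0)

/-- Probability that the first `t` steps of the Markov chain with transition
matrix `M` started at `u` form a trajectory satisfying `E`:  the sum, over all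
paths realizing the event, of the product of the transition probabilities. -/
def walkProb (M : Matrix V V ℝ) (u : V) (t : ℕ)
    (E : (Fin (t + 1) → V) → Prop) : ℝ :=
  ∑ p : Fin (t + 1) → V,
    if p 0 = u ∧ E p then ∏ i : Fin t, M (p i.castSucc) (p i.succ) else 0

/-- The mixing time `T = min { t ≥ 1 : |M^t x y - 1/n| ≤ n⁻³ for all x,y }`. -/
def mixingTime (G : SimpleGraph V) (d : ℕ) : ℕ :=
  sInf {T : ℕ | 1 ≤ T ∧ ∀ x y : V,
    |((lazyStep G d) ^ T) x y - ((Fintype.card V : ℝ))⁻¹| ≤ (((Fintype.card V : ℝ)) ^ 3)⁻¹}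

/-- Property P1: the second largest eigenvalue of the lazy walk matrix is at
most `1 - g`, stated via the Rayleigh quotient on the orthogonal complement of
the constant (top) eigenvector. -/
def SpectralGapLB (G : SimpleGraph V) (d : ℕ) (g : ℝ) : Prop :=
  ∀ x : V → ℝ, (∑ v : V, x v) = 0 →
    (∑ u : V, ∑ v : V, x u * lazyStep G d u v * x v) ≤ (1 - g) * ∑ v : V, x v ^ 2

/-- Property P3 with constant `ρ₂`: for vertices `u,v` at distance at most
`d^ε`, the number of neighbours `w` of `v` with `dist w u ≤ dist u v` is at
most `ρ₂ · dist u v`. -/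
def PropP3 (G : SimpleGraph V) (d : ℕ) (ε ρ₂ : ℝ) : Prop :=
  ∀ u v : V, (G.dist u v : ℝ) ≤ (d : ℝ) ^ ε →
    (((univ : Finset V).filter fun w => G.Adj v w ∧ G.dist w u ≤ G.dist u v).card : ℝ) ≤
      ρ₂ * (G.dist u v : ℝ)

/-- The number of edges of `G` with both endpoints in `S`. -/
def edgesInside (G : SimpleGraph V) (S : Finset V) : ℕ :=
  ((S ×ˢ S).filter fun p => G.Adj p.1 p.2).card / 2

/-- The set of vertices of `G` not visited by the trajectory `p` at any step
`s` with `t₀ ≤ s` contains a connected (in the induced subgraph) subset of at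
least `K` vertices; equivalently, the subgraph induced by this vacant set has a
connected component with at least `K` vertices. -/
def bigVacantComponent (G : SimpleGraph V) {t : ℕ} (p : Fin (t + 1) → V)
    (t₀ : ℕ) (K : ℝ) : Prop :=
  ∃ S : Finset V, (∀ v ∈ S, ∀ s : Fin (t + 1), t₀ ≤ (s : ℕ) → p s ≠ v) ∧
    (G.induce (S : Set V)).Connected ∧ K ≤ (S.card : ℝ)

/-!
Let `P` be the transition matrix of the simple random walk. If the Rayleigh quotient of `P` is at
most `1 - κ` on the functions vanishing on a set `S`, then the walk avoids `S` for `t` steps with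
probability at most `√n (1 - κ) ^ t`. A vacant component with at least `δ log n` vertices contains
a connected set of exactly `k = ⌈δ log n⌉` vertices, and comparison with site percolation of
density `1 / d` shows that there are at most `n (e² d) ^ k` such sets. A union bound therefore
suffices once `κ` is close to `k / n`, as `t ≥ (1 + ε) n log d` and `ε log d → ∞`.

That `κ` can be taken so large means that the walk rarely returns to `S` before mixing. By P3 the
distance layers of a small set whose induced degrees are all large would have to grow at a rate
proportional to this degree, so small sets induce sparse graphs, and `P` has norm at most
`η = d ^ (-a)` on the functions supported near `S`. Hence the potential `∑ j < J, P ^ j 1_S` has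
Dirichlet energy close to `k`. Pairing it in the Dirichlet form with a function `x` that vanishes
on `S` recovers the mean of `x` up to a term `P ^ J 1_S` that the spectral gap controls, and the
Cauchy–Schwarz inequality bounds this mean by the Dirichlet energy of `x`.
-/

open scoped Matrix

section SymmetricMatrix

variable {α : Type*} [Fintype α] {M : Matrix α α ℝ} {X : Set α} {θ : ℝ}

lemma dotProduct_mulVec_comm_of_isSymm (hM : M.IsSymm) (x y : α → ℝ) :
    x ⬝ᵥ M *ᵥ y = y ⬝ᵥ M *ᵥ x := by
  rw [Matrix.dotProduct_mulVec, ← Matrix.mulVec_transpose, hM.eq, dotProduct_comm]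

lemma neg_dotProduct_mulVec_le_abs (hM : ∀ u v, 0 ≤ M u v) (x : α → ℝ) :
    -(x ⬝ᵥ M *ᵥ x) ≤ |x| ⬝ᵥ M *ᵥ |x| := by
  simp only [dotProduct, Matrix.mulVec, mul_sum, ← sum_neg_distrib, Pi.abs_apply]
  gcongr with u _ v _
  calc -(x u * (M u v * x v)) ≤ |x u * (M u v * x v)| := neg_le_abs _
    _ = |x u| * (M u v * |x v|) := by rw [abs_mul, abs_mul, abs_of_nonneg (hM u v)]

/-- The Rayleigh quotient of `M` is at most `θ` on the functions supported in `X`; for symmetric `M`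
this says that the largest eigenvalue of the restriction of `M` to `X` is at most `θ`. -/
def RayleighLEOn (M : Matrix α α ℝ) (X : Set α) (θ : ℝ) : Prop :=
  ∀ x : α → ℝ, (∀ v ∉ X, x v = 0) → x ⬝ᵥ M *ᵥ x ≤ θ * (x ⬝ᵥ x)

namespace RayleighLEOn

lemma dotProduct_mulVec_le (h : RayleighLEOn M X θ) (hsymm : M.IsSymm) (hM : ∀ u v, 0 ≤ M u v)
    {f g : α → ℝ} (hf : ∀ v ∉ X, f v = 0) (hg : ∀ v ∉ X, g v = 0) :
    f ⬝ᵥ M *ᵥ g ≤ θ / 2 * (f ⬝ᵥ f + g ⬝ᵥ g) := by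
  have h_add := h (f + g) fun v hv => by simp [hf v hv, hg v hv]
  have h_sub : -((f - g) ⬝ᵥ M *ᵥ (f - g)) ≤ θ * ((f - g) ⬝ᵥ (f - g)) :=
    calc -((f - g) ⬝ᵥ M *ᵥ (f - g)) ≤ |f - g| ⬝ᵥ M *ᵥ |f - g| :=
          neg_dotProduct_mulVec_le_abs hM _
      _ ≤ θ * (|f - g| ⬝ᵥ |f - g|) := h _ fun v hv => by simp [hf v hv, hg v hv]
      _ = θ * ((f - g) ⬝ᵥ (f - g)) := by simp only [dotProduct, Pi.abs_apply, abs_mul_abs_self]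
  simp only [Matrix.mulVec_add, Matrix.mulVec_sub, add_dotProduct, dotProduct_add, sub_dotProduct,
    dotProduct_sub, dotProduct_mulVec_comm_of_isSymm hsymm g f, dotProduct_comm g f] at h_add h_sub
  linarith

lemma dotProduct_self_le_of_step (h : RayleighLEOn M X θ) (hsymm : M.IsSymm)
    (hM : ∀ u v, 0 ≤ M u v) (hθ : 0 < θ) {f g : α → ℝ} (hf : ∀ v ∉ X, f v = 0)
    (hg : ∀ v ∉ X, g v = 0) (hfg : ∀ v ∈ X, f v = (M *ᵥ g) v) :
    f ⬝ᵥ f ≤ θ ^ 2 * (g ⬝ᵥ g) := by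
  have hff : f ⬝ᵥ M *ᵥ g = f ⬝ᵥ f := by
    refine sum_congr rfl fun v _ => ?_
    by_cases hv : v ∈ X
    · rw [hfg v hv]
    · simp [hf v hv]
  have hbound := h.dotProduct_mulVec_le hsymm hM hf (g := θ • g) fun v hv => by simp [hg v hv]
  simp only [Matrix.mulVec_smul, dotProduct_smul, smul_dotProduct, smul_eq_mul, hff] at hbound
  refine le_of_mul_le_mul_left ?_ hθ
  linarith

lemma dotProduct_self_iterate_le (h : RayleighLEOn M X θ) (hsymm : M.IsSymm)
    (hM : ∀ u v, 0 ≤ M u v) (hθ : 0 < θ) {f : ℕ → α → ℝ} {J : ℕ}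
    (hsupp : ∀ j ≤ J, ∀ v ∉ X, f j v = 0) (hstep : ∀ j < J, ∀ v ∈ X, f (j + 1) v = (M *ᵥ f j) v) :
    f J ⬝ᵥ f J ≤ (θ ^ J) ^ 2 * (f 0 ⬝ᵥ f 0) := by
  induction J with
  | zero => simp
  | succ J ih =>
    calc f (J + 1) ⬝ᵥ f (J + 1) ≤ θ ^ 2 * (f J ⬝ᵥ f J) :=
          h.dotProduct_self_le_of_step hsymm hM hθ (hsupp _ le_rfl) (hsupp J (by lia))
            (hstep J (by lia))
      _ ≤ θ ^ 2 * ((θ ^ J) ^ 2 * (f 0 ⬝ᵥ f 0)) := by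
          gcongr
          exact ih (fun j hj => hsupp j (by lia)) fun j hj => hstep j (by lia)
      _ = (θ ^ (J + 1)) ^ 2 * (f 0 ⬝ᵥ f 0) := by ring

end RayleighLEOn

end SymmetricMatrix

section SpectralGap

variable {α : Type*} [Fintype α] [DecidableEq α] {M : Matrix α α ℝ} {γ : ℝ}

/-- The Dirichlet form `⟨x, (1 - M) y⟩` of the chain with transition matrix `M` and uniform
reversing measure, without normalisation. -/
def dirichletForm (M : Matrix α α ℝ) : LinearMap.BilinForm ℝ (α → ℝ) :=
  Matrix.toBilin' (1 - M)

lemma dirichletForm_apply (M : Matrix α α ℝ) (x y : α → ℝ) :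
    dirichletForm M x y = x ⬝ᵥ (1 - M) *ᵥ y :=
  Matrix.toBilin'_apply' _ _ _

lemma dirichletForm_isSymm (hM : M.IsSymm) : LinearMap.IsSymm (dirichletForm M) :=
  ⟨fun x y => by
    simp only [RingHom.id_apply, dirichletForm_apply,
      dotProduct_mulVec_comm_of_isSymm (Matrix.isSymm_one.sub hM) x y]⟩

lemma dirichletForm_one_right (hM : M ∈ doublyStochastic ℝ α) (x : α → ℝ) :
    dirichletForm M x 1 = 0 := by
  rw [dirichletForm_apply, Matrix.sub_mulVec, Matrix.one_mulVec,
    mulVec_one_of_mem_doublyStochastic hM, sub_self, dotProduct_zero]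

/-- The spectral gap of `M` is at least `γ`, in Rayleigh-quotient form. -/
def HasSpectralGap (M : Matrix α α ℝ) (γ : ℝ) : Prop :=
  ∀ x : α → ℝ, ∑ v, x v = 0 → γ * (x ⬝ᵥ x) ≤ dirichletForm M x x

omit [DecidableEq α] in
lemma dotProduct_self_nonneg (x : α → ℝ) : 0 ≤ x ⬝ᵥ x :=
  sum_nonneg fun _ _ => mul_self_nonneg _

omit [DecidableEq α] in
lemma dotProduct_sq_le (x y : α → ℝ) : (x ⬝ᵥ y) ^ 2 ≤ (x ⬝ᵥ x) * (y ⬝ᵥ y) := by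
  simpa only [dotProduct, ← sq] using sum_mul_sq_le_sq_mul_sq univ x y

omit [DecidableEq α] in
lemma dotProduct_le_mul_of_dotProduct_self_le {x y : α → ℝ} {c : ℝ} (hc : 0 ≤ c)
    (hx : x ⬝ᵥ x ≤ c ^ 2 * (y ⬝ᵥ y)) : x ⬝ᵥ y ≤ c * (y ⬝ᵥ y) := by
  have hy := dotProduct_self_nonneg y
  refine abs_le_of_sq_le_sq' ?_ (by positivity) |>.2
  calc (x ⬝ᵥ y) ^ 2 ≤ (x ⬝ᵥ x) * (y ⬝ᵥ y) := dotProduct_sq_le x y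
    _ ≤ c ^ 2 * (y ⬝ᵥ y) * (y ⬝ᵥ y) := by gcongr
    _ = (c * (y ⬝ᵥ y)) ^ 2 := by ring

omit [DecidableEq α] in
lemma exists_eq_const_add_sum_eq_zero (x : α → ℝ) :
    ∃ (a : ℝ) (h : α → ℝ), x = a • 1 + h ∧ ∑ v, h v = 0 := by
  refine ⟨(∑ v, x v) / Fintype.card α, x - ((∑ v, x v) / Fintype.card α) • 1, by simp, ?_⟩
  rcases isEmpty_or_nonempty α
  · simp
  · simp [mul_div_cancel₀]

omit [DecidableEq α] in
lemma dotProduct_self_const_add {a : ℝ} {h : α → ℝ} (hh : ∑ v, h v = 0) :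
    (a • 1 + h) ⬝ᵥ (a • 1 + h) = Fintype.card α * a ^ 2 + h ⬝ᵥ h := by
  simp only [add_dotProduct, dotProduct_add, smul_dotProduct, dotProduct_smul, one_dotProduct,
    dotProduct_one, hh, Pi.add_apply, Pi.smul_apply, Pi.one_apply, sum_add_distrib, sum_const,
    card_univ, nsmul_eq_mul, smul_eq_mul]
  ring

lemma dirichletForm_const_add (hM : M ∈ doublyStochastic ℝ α) (hsymm : M.IsSymm) (a : ℝ)
    (h : α → ℝ) : dirichletForm M (a • 1 + h) (a • 1 + h) = dirichletForm M h h := by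
  have hleft : dirichletForm M 1 h = 0 :=
    ((dirichletForm_isSymm hsymm).eq h 1).symm.trans (dirichletForm_one_right hM h)
  simp [dirichletForm_one_right hM, hleft]

lemma HasSpectralGap.dirichletForm_self_nonneg (hgap : HasSpectralGap M γ) (hγ : 0 ≤ γ)
    (hM : M ∈ doublyStochastic ℝ α) (hsymm : M.IsSymm) (x : α → ℝ) : 0 ≤ dirichletForm M x x := by
  obtain ⟨a, h, rfl, hh⟩ := exists_eq_const_add_sum_eq_zero x
  rw [dirichletForm_const_add hM hsymm]
  exact (mul_nonneg hγ (dotProduct_self_nonneg h)).trans (hgap h hh)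

/-- The potential `∑ j < J, M ^ j b` of the charge `b`, truncated at time `J`. -/
def truncatedPotential (M : Matrix α α ℝ) (b : α → ℝ) (J : ℕ) : α → ℝ :=
  (∑ j ∈ range J, M ^ j) *ᵥ b

variable {b : α → ℝ} {θ : ℝ} {J : ℕ}

lemma dirichletForm_truncatedPotential (M : Matrix α α ℝ) (b x : α → ℝ) (J : ℕ) :
    dirichletForm M x (truncatedPotential M b J) = x ⬝ᵥ b - x ⬝ᵥ (M ^ J *ᵥ b) := by
  rw [dirichletForm_apply, truncatedPotential, Matrix.mulVec_mulVec, mul_neg_geom_sum,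
    Matrix.sub_mulVec, Matrix.one_mulVec, dotProduct_sub]

lemma dirichletForm_truncatedPotential_self_le (hM : M ∈ doublyStochastic ℝ α) (hb : 0 ≤ b)
    (hθ : 0 ≤ θ) (hθ1 : θ < 1)
    (hdecay : ∀ j ≤ J, (M ^ j *ᵥ b) ⬝ᵥ (M ^ j *ᵥ b) ≤ (θ ^ j) ^ 2 * (b ⬝ᵥ b)) :
    dirichletForm M (truncatedPotential M b J) (truncatedPotential M b J) ≤
      (1 - θ)⁻¹ * (b ⬝ᵥ b) := by
  have hpow (j : ℕ) : 0 ≤ M ^ j *ᵥ b := fun v =>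
    sum_nonneg fun w _ => mul_nonneg (nonneg_of_mem_doublyStochastic (pow_mem hM j)) (hb w)
  have hpot : truncatedPotential M b J = ∑ j ∈ range J, M ^ j *ᵥ b := Matrix.sum_mulVec _ _ _
  calc _ = truncatedPotential M b J ⬝ᵥ b - truncatedPotential M b J ⬝ᵥ (M ^ J *ᵥ b) :=
        dirichletForm_truncatedPotential M b _ J
    _ ≤ truncatedPotential M b J ⬝ᵥ b := by
        refine sub_le_self _ (dotProduct_nonneg_of_nonneg ?_ (hpow J))
        exact hpot ▸ sum_nonneg fun j _ => hpow j
    _ = ∑ j ∈ range J, (M ^ j *ᵥ b) ⬝ᵥ b := by rw [hpot, sum_dotProduct]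
    _ ≤ ∑ j ∈ range J, θ ^ j * (b ⬝ᵥ b) := by
        gcongr with j hj
        exact dotProduct_le_mul_of_dotProduct_self_le (by positivity) (hdecay j (mem_range.1 hj).le)
    _ ≤ (1 - θ)⁻¹ * (b ⬝ᵥ b) := by
        rw [← sum_mul]
        gcongr
        · exact dotProduct_self_nonneg b
        · rw [← tsum_geometric_of_lt_one hθ hθ1]
          exact (summable_geometric_of_lt_one hθ hθ1).sum_le_tsum _ fun j _ => by positivity

lemma HasSpectralGap.sq_dirichletForm_truncatedPotential_le (hgap : HasSpectralGap M γ)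
    (hγ : 0 ≤ γ) (hM : M ∈ doublyStochastic ℝ α) (hsymm : M.IsSymm) (hb : 0 ≤ b)
    (hθ : 0 ≤ θ) (hθ1 : θ < 1)
    (hdecay : ∀ j ≤ J, (M ^ j *ᵥ b) ⬝ᵥ (M ^ j *ᵥ b) ≤ (θ ^ j) ^ 2 * (b ⬝ᵥ b)) (f : α → ℝ) :
    dirichletForm M f (truncatedPotential M b J) ^ 2 ≤
      (1 - θ)⁻¹ * ((b ⬝ᵥ b) * dirichletForm M f f) := by
  have hnonneg := hgap.dirichletForm_self_nonneg hγ hM hsymm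
  calc _ ≤ dirichletForm M f f *
        dirichletForm M (truncatedPotential M b J) (truncatedPotential M b J) :=
        LinearMap.BilinForm.apply_sq_le_of_symm _ hnonneg (dirichletForm_isSymm hsymm) _ _
    _ ≤ dirichletForm M f f * ((1 - θ)⁻¹ * (b ⬝ᵥ b)) := by
        gcongr
        · exact hnonneg f
        · exact dirichletForm_truncatedPotential_self_le hM hb hθ hθ1 hdecay
    _ = _ := by ring

end SpectralGap

lemma add_sq_le_add_sq_mul {x y p q Y : ℝ} (hp : 0 ≤ p) (hq : 0 ≤ q) (hY : 0 ≤ Y)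
    (hx : x ^ 2 ≤ p ^ 2 * Y) (hy : y ^ 2 ≤ q ^ 2 * Y) : (x + y) ^ 2 ≤ (p + q) ^ 2 * Y := by
  have hx' : |x| ≤ p * √Y := abs_le_of_sq_le_sq (by rwa [mul_pow, Real.sq_sqrt hY]) (by positivity)
  have hy' : |y| ≤ q * √Y := abs_le_of_sq_le_sq (by rwa [mul_pow, Real.sq_sqrt hY]) (by positivity)
  calc (x + y) ^ 2 = |x + y| ^ 2 := (sq_abs _).symm
    _ ≤ (p * √Y + q * √Y) ^ 2 := by
        gcongr
        exact (abs_add_le x y).trans (by linarith)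
    _ = (p + q) ^ 2 * Y := by rw [← add_mul, mul_pow, Real.sq_sqrt hY]

section SpectralGap

variable {α : Type*} [Fintype α] [DecidableEq α] {M : Matrix α α ℝ} {b : α → ℝ} {γ θ : ℝ} {J : ℕ}

/-- If `f` is orthogonal to `b`, pairing `f` with the truncated potential of `b` expresses the
mean of `f` through `dirichletForm M f f` and a remainder controlled by the spectral gap. -/
lemma HasSpectralGap.dotProduct_self_le_dirichletForm (hgap : HasSpectralGap M γ) (hγ : 0 < γ)
    (hM : M ∈ doublyStochastic ℝ α) (hsymm : M.IsSymm) (hb : 0 ≤ b) (hb_sum : 0 < ∑ v, b v)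
    (hθ : 0 ≤ θ) (hθ1 : θ < 1)
    (hdecay : ∀ j ≤ J, (M ^ j *ᵥ b) ⬝ᵥ (M ^ j *ᵥ b) ≤ (θ ^ j) ^ 2 * (b ⬝ᵥ b))
    {p q : ℝ} (hp : 0 ≤ p) (hq : 0 ≤ q) (hpθ : (1 - θ)⁻¹ ≤ p ^ 2) (hqθ : (θ ^ J) ^ 2 ≤ γ * q ^ 2)
    {f : α → ℝ} (hfb : f ⬝ᵥ b = 0) :
    f ⬝ᵥ f ≤ (Fintype.card α * (p + q) ^ 2 * (b ⬝ᵥ b) / (∑ v, b v) ^ 2 + γ⁻¹) *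
      dirichletForm M f f := by
  obtain ⟨a, h, rfl, hh⟩ := exists_eq_const_add_sum_eq_zero f
  set E := dirichletForm M (a • 1 + h) (a • 1 + h) with hE
  set ψ := truncatedPotential M b J
  have hE0 : 0 ≤ E := hgap.dirichletForm_self_nonneg hγ.le hM hsymm _
  have hbb := dotProduct_self_nonneg b
  have hpoincare : h ⬝ᵥ h ≤ γ⁻¹ * E := by
    rw [le_inv_mul_iff₀ hγ, hE, dirichletForm_const_add hM hsymm]
    exact hgap h hh
  have hpairing : dirichletForm M (a • 1 + h) ψ ^ 2 ≤ p ^ 2 * ((b ⬝ᵥ b) * E) :=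
    (hgap.sq_dirichletForm_truncatedPotential_le hγ.le hM hsymm hb hθ hθ1 hdecay _).trans
      (by gcongr)
  have hremainder : (h ⬝ᵥ M ^ J *ᵥ b) ^ 2 ≤ q ^ 2 * ((b ⬝ᵥ b) * E) :=
    calc _ ≤ (h ⬝ᵥ h) * ((M ^ J *ᵥ b) ⬝ᵥ (M ^ J *ᵥ b)) := dotProduct_sq_le _ _
      _ ≤ (γ⁻¹ * E) * (γ * q ^ 2 * (b ⬝ᵥ b)) := by
          gcongr
          · exact dotProduct_self_nonneg _
          · exact (hdecay J le_rfl).trans (by gcongr)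
      _ = _ := by field_simp
  have hmean : a * ∑ v, b v = -(dirichletForm M (a • 1 + h) ψ + h ⬝ᵥ M ^ J *ᵥ b) := by
    rw [dirichletForm_truncatedPotential, hfb, add_dotProduct, smul_dotProduct, one_dotProduct,
      sum_mulVec_of_mem_doublyStochastic (pow_mem hM J), smul_eq_mul]
    ring
  have hmean_sq : a ^ 2 ≤ (p + q) ^ 2 * ((b ⬝ᵥ b) * E) / (∑ v, b v) ^ 2 := by
    rw [le_div_iff₀ (by positivity), ← mul_pow, hmean, neg_sq]
    exact add_sq_le_add_sq_mul hp hq (by positivity) hpairing hremainder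
  calc _ = Fintype.card α * a ^ 2 + h ⬝ᵥ h := dotProduct_self_const_add hh
    _ ≤ Fintype.card α * ((p + q) ^ 2 * ((b ⬝ᵥ b) * E) / (∑ v, b v) ^ 2) + γ⁻¹ * E := by gcongr
    _ = _ := by ring

omit [DecidableEq α] in
lemma indicator_dotProduct_indicator (S : Finset α) :
    (S : Set α).indicator (1 : α → ℝ) ⬝ᵥ (S : Set α).indicator 1 = #S := by
  simp [dotProduct, Set.indicator_apply]

lemma RayleighLEOn.pow_mulVec_dotProduct_self_le {X : Set α} (hX : RayleighLEOn M X θ)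
    (hsymm : M.IsSymm) (hM : ∀ u v, 0 ≤ M u v) (hθ : 0 < θ)
    (hsupp : ∀ j ≤ J, ∀ v ∉ X, (M ^ j *ᵥ b) v = 0) :
    (M ^ J *ᵥ b) ⬝ᵥ (M ^ J *ᵥ b) ≤ (θ ^ J) ^ 2 * (b ⬝ᵥ b) := by
  have h := hX.dotProduct_self_iterate_le hsymm hM hθ (f := fun j => M ^ j *ᵥ b) hsupp
    fun j _ v _ => by rw [Matrix.mulVec_mulVec, pow_succ']
  simpa using h

lemma HasSpectralGap.dotProduct_self_le_of_eq_zero_on (hgap : HasSpectralGap M γ) (hγ : 0 < γ)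
    (hM : M ∈ doublyStochastic ℝ α) (hsymm : M.IsSymm) {S : Finset α} (hS : S.Nonempty) {X : Set α}
    (hX : RayleighLEOn M X θ) (hθ : 0 < θ) (hθ1 : θ < 1)
    (hsupp : ∀ j ≤ J, ∀ v ∉ X, (M ^ j *ᵥ (S : Set α).indicator 1) v = 0)
    {p q : ℝ} (hp : 0 ≤ p) (hq : 0 ≤ q) (hpθ : (1 - θ)⁻¹ ≤ p ^ 2) (hqθ : (θ ^ J) ^ 2 ≤ γ * q ^ 2)
    {f : α → ℝ} (hf : ∀ v ∈ S, f v = 0) :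
    f ⬝ᵥ f ≤ (Fintype.card α / #S * (p + q) ^ 2 + γ⁻¹) * dirichletForm M f f := by
  set b : α → ℝ := (S : Set α).indicator 1
  have hs : (0 : ℝ) < #S := mod_cast hS.card_pos
  have hb : 0 ≤ b := Set.indicator_nonneg fun _ _ => zero_le_one
  have hb_sum : ∑ v, b v = #S := by simp [b, Set.indicator_apply]
  have hfb : f ⬝ᵥ b = 0 := sum_eq_zero fun v _ => by
    by_cases hv : v ∈ S
    · rw [hf v hv, zero_mul]
    · simp [b, hv]
  have hdecay : ∀ j ≤ J, (M ^ j *ᵥ b) ⬝ᵥ (M ^ j *ᵥ b) ≤ (θ ^ j) ^ 2 * (b ⬝ᵥ b) := fun j hj =>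
    hX.pow_mulVec_dotProduct_self_le hsymm (fun _ _ => nonneg_of_mem_doublyStochastic hM) hθ
      fun i hi => hsupp i (hi.trans hj)
  have hff := hgap.dotProduct_self_le_dirichletForm hγ hM hsymm hb (hb_sum ▸ hs) hθ.le hθ1 hdecay
    hp hq hpθ hqθ hfb
  rw [hb_sum, indicator_dotProduct_indicator] at hff
  convert hff using 3
  field_simp

lemma HasSpectralGap.rayleighLEOn_compl (hgap : HasSpectralGap M γ) (hγ : 0 < γ)
    (hM : M ∈ doublyStochastic ℝ α) (hsymm : M.IsSymm) {S : Finset α} (hS : S.Nonempty) {X : Set α}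
    (hX : RayleighLEOn M X θ) (hθ : 0 < θ)
    (hsupp : ∀ j ≤ J, ∀ v ∉ X, (M ^ j *ᵥ (S : Set α).indicator 1) v = 0) {η : ℝ} (hη : η ≤ 1 / 6)
    (hθη : θ ≤ η) (hJ : (θ ^ J) ^ 2 ≤ γ * η ^ 2) (hcard : #S ≤ η * γ * Fintype.card α) :
    RayleighLEOn M (S : Set α)ᶜ (1 - #S / Fintype.card α * (1 - 6 * η)) := by
  intro f hf
  have hs : (0 : ℝ) < #S := mod_cast hS.card_pos
  have hn : (0 : ℝ) < Fintype.card α := mod_cast hS.card_pos.trans_le (card_le_univ S)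
  have hη0 : 0 < η := hθ.trans_le hθη
  have hE : 0 ≤ dirichletForm M f f := hgap.dirichletForm_self_nonneg hγ.le hM hsymm f
  have hθ_inv : (1 - θ)⁻¹ ≤ (1 + η) ^ 2 := by
    rw [inv_le_iff_one_le_mul₀ (by linarith)]
    nlinarith [mul_le_mul_of_nonneg_right hθη (sq_nonneg (1 + η)), pow_pos hη0 2]
  have hγ_inv : γ⁻¹ ≤ η * (Fintype.card α / #S) := by
    rw [← mul_div_assoc, le_div_iff₀ hs, inv_mul_le_iff₀ hγ]
    linarith
  have hff : f ⬝ᵥ f ≤ Fintype.card α / #S * ((1 + 2 * η) ^ 2 + η) * dirichletForm M f f :=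
    calc _ ≤ (Fintype.card α / #S * (1 + η + η) ^ 2 + γ⁻¹) * dirichletForm M f f :=
          hgap.dotProduct_self_le_of_eq_zero_on hγ hM hsymm hS hX hθ (by linarith) hsupp
            (by positivity) hη0.le hθ_inv hJ fun v hv => hf v (by simpa using hv)
      _ ≤ (Fintype.card α / #S * (1 + η + η) ^ 2 + η * (Fintype.card α / #S)) *
            dirichletForm M f f := by gcongr
      _ = _ := by ring
  have hgain : #S / Fintype.card α * (1 - 6 * η) * (f ⬝ᵥ f) ≤ dirichletForm M f f :=
    calc _ ≤ #S / Fintype.card α * (1 - 6 * η) *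
            (Fintype.card α / #S * ((1 + 2 * η) ^ 2 + η) * dirichletForm M f f) := by
          gcongr
          exact mul_nonneg (by positivity) (by linarith)
      _ = (1 - 6 * η) * ((1 + 2 * η) ^ 2 + η) * dirichletForm M f f := by field_simp
      _ ≤ dirichletForm M f f :=
          mul_le_of_le_one_left hE (by nlinarith [pow_pos hη0 2, pow_pos hη0 3])
  rw [dirichletForm_apply, Matrix.sub_mulVec, Matrix.one_mulVec, dotProduct_sub] at hgain
  linarith

end SpectralGap

section Walk

variable {α : Type*} [Fintype α] [DecidableEq α] {M : Matrix α α ℝ}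

lemma walkProb_nonneg (hM : ∀ u v, 0 ≤ M u v) (u : α) (t : ℕ) (E : (Fin (t + 1) → α) → Prop) :
    0 ≤ walkProb M u t E :=
  sum_nonneg fun p _ => by
    split_ifs
    · exact prod_nonneg fun i _ => hM _ _
    · rfl

lemma walkProb_le_sum_of_exists (hM : ∀ u v, 0 ≤ M u v) (u : α) (t : ℕ) {ι : Type*} {C : Finset ι}
    {E : (Fin (t + 1) → α) → Prop} {F : ι → (Fin (t + 1) → α) → Prop}
    (hEF : ∀ p, E p → ∃ i ∈ C, F i p) :
    walkProb M u t E ≤ ∑ i ∈ C, walkProb M u t (F i) := by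
  simp only [walkProb]
  rw [sum_comm]
  gcongr with p _
  have hnonneg : ∀ i ∈ C, 0 ≤ if p 0 = u ∧ F i p then
      ∏ j : Fin t, M (p j.castSucc) (p j.succ) else 0 := fun i _ => by
    split_ifs
    · exact prod_nonneg fun j _ => hM _ _
    · rfl
  by_cases h : p 0 = u ∧ E p
  · obtain ⟨i, hi, hFi⟩ := hEF p h.2
    rw [if_pos h]
    exact (if_pos ⟨h.1, hFi⟩).symm.trans_le (single_le_sum hnonneg hi)
  · rw [if_neg h]
    exact sum_nonneg hnonneg

lemma walkProb_eq_sum (M : Matrix α α ℝ) (u : α) (t : ℕ) (E : (Fin (t + 1) → α) → Prop) :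
    walkProb M u t E = ∑ q : Fin t → α, if E (Fin.cons u q) then
      ∏ i : Fin t, M ((Fin.cons u q : Fin (t + 1) → α) i.castSucc) (q i) else 0 := by
  rw [walkProb, ← (Fin.consEquiv fun _ : Fin (t + 1) => α).sum_comp, Fintype.sum_prod_type,
    sum_eq_single u (fun v _ hv => sum_eq_zero fun q _ => by simp [Fin.consEquiv, hv]) (by simp)]
  simp [Fin.consEquiv]

lemma walkProb_succ (M : Matrix α α ℝ) (u : α) (t : ℕ) (E : (Fin (t + 2) → α) → Prop) :
    walkProb M u (t + 1) E = ∑ v, M u v * walkProb M v t fun q => E (Fin.cons u q) := by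
  rw [walkProb_eq_sum, ← (Fin.consEquiv fun _ : Fin (t + 1) => α).sum_comp, Fintype.sum_prod_type]
  refine sum_congr rfl fun v _ => ?_
  rw [walkProb_eq_sum, mul_sum]
  refine sum_congr rfl fun q _ => ?_
  rw [mul_ite, mul_zero, Fin.prod_univ_succ]
  simp [Fin.consEquiv]

/-- The probability that the chain with transition matrix `M` started at `u` avoids `S` during its
first `t` steps, as a function of `u`. -/
def avoidProb (M : Matrix α α ℝ) (S : Finset α) (t : ℕ) (u : α) : ℝ :=
  walkProb M u t fun p => ∀ s, p s ∉ S

lemma avoidProb_of_mem (M : Matrix α α ℝ) {S : Finset α} {u : α} (hu : u ∈ S) (t : ℕ) :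
    avoidProb M S t u = 0 := by
  simp [avoidProb, walkProb_eq_sum, Fin.forall_fin_succ, hu]

lemma avoidProb_zero_of_notMem (M : Matrix α α ℝ) {S : Finset α} {u : α} (hu : u ∉ S) :
    avoidProb M S 0 u = 1 := by
  simp [avoidProb, walkProb_eq_sum, hu]

lemma avoidProb_succ_of_notMem (M : Matrix α α ℝ) {S : Finset α} {u : α} (hu : u ∉ S) (t : ℕ) :
    avoidProb M S (t + 1) u = (M *ᵥ avoidProb M S t) u := by
  simp [avoidProb, walkProb_succ, Fin.forall_fin_succ (n := t + 1), hu, Matrix.mulVec, dotProduct]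

lemma RayleighLEOn.avoidProb_le {S : Finset α} {κ : ℝ}
    (h : RayleighLEOn M (S : Set α)ᶜ (1 - κ)) (hsymm : M.IsSymm) (hM : ∀ u v, 0 ≤ M u v)
    (t : ℕ) (u : α) : avoidProb M S t u ≤ Real.exp (-κ * t) * √(Fintype.card α) := by
  have h_exp : RayleighLEOn M (S : Set α)ᶜ (Real.exp (-κ)) := fun x hx =>
    (h x hx).trans (mul_le_mul_of_nonneg_right (Real.one_sub_le_exp_neg κ)
      (dotProduct_self_nonneg x))
  have hsupp (j : ℕ) : ∀ v ∉ (S : Set α)ᶜ, avoidProb M S j v = 0 := fun v hv =>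
    avoidProb_of_mem M (by simpa using hv) j
  have hdecay := h_exp.dotProduct_self_iterate_le hsymm hM (Real.exp_pos _) (J := t)
    (fun j _ => hsupp j) fun j _ v hv => avoidProb_succ_of_notMem M (by simpa using hv) j
  have hinit : avoidProb M S 0 ⬝ᵥ avoidProb M S 0 ≤ Fintype.card α := by
    rw [dotProduct, Fintype.card, ← nsmul_one (#univ)]
    refine sum_le_card_nsmul _ _ _ fun v _ => ?_
    by_cases hv : v ∈ S
    · simp [avoidProb_of_mem M hv]
    · simp [avoidProb_zero_of_notMem M hv]
  refine abs_le_of_sq_le_sq' ?_ (by positivity) |>.2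
  calc avoidProb M S t u ^ 2 ≤ avoidProb M S t ⬝ᵥ avoidProb M S t := by
        rw [sq]
        exact single_le_sum (fun v _ => mul_self_nonneg (avoidProb M S t v)) (mem_univ u)
    _ ≤ (Real.exp (-κ) ^ t) ^ 2 * Fintype.card α := hdecay.trans (by gcongr)
    _ = _ := by rw [mul_pow, Real.sq_sqrt (by positivity), mul_comm (-κ), Real.exp_nat_mul]

end Walk

section DegenerateMatrix

variable {α : Type*} {M : Matrix α α ℝ} {X : Finset α} {D : ℝ}

/-- Every nonempty subset `T` of `X` has an element of weighted degree at most `D` inside `T`, as in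
a `D`-degenerate graph. -/
def IsDegenerateOn (M : Matrix α α ℝ) (X : Finset α) (D : ℝ) : Prop :=
  ∀ T ⊆ X, T.Nonempty → ∃ v ∈ T, ∑ w ∈ T, M v w ≤ D

lemma two_mul_mul_le_add_inv {c : ℝ} (hc : 0 < c) (a b : ℝ) :
    2 * (a * b) ≤ c * a ^ 2 + c⁻¹ * b ^ 2 := by
  have h : c * a ^ 2 + c⁻¹ * b ^ 2 - 2 * (a * b) = c⁻¹ * (c * a - b) ^ 2 := by
    field_simp
    ring
  linarith [show 0 ≤ c⁻¹ * (c * a - b) ^ 2 by positivity]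

/-- Peel off the vertices of small degree one at a time and apply AM-GM, with weight `c` on the
peeled vertex, to each edge that disappears. -/
lemma IsDegenerateOn.sum_sum_le (hX : IsDegenerateOn M X D) (hsymm : M.IsSymm)
    (hM : ∀ u v, 0 ≤ M u v) {c : ℝ} (hc : 0 < c) (x : α → ℝ) :
    ∑ u ∈ X, ∑ v ∈ X, M u v * (x u * x v) ≤
      c * D * ∑ v ∈ X, x v ^ 2 + c⁻¹ * ∑ w ∈ X, (∑ v ∈ X, M w v) * x w ^ 2 := by
  induction X using Finset.strongInduction with
  | H T ih =>
    rcases T.eq_empty_or_nonempty with rfl | hT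
    · simp
    obtain ⟨v, hv, hvD⟩ := hX T subset_rfl hT
    have ih_erase := ih (T.erase v) (erase_ssubset hv)
      fun T' hT' => hX T' (hT'.trans (erase_subset v T))
    obtain ⟨R, hvR, rfl⟩ : ∃ R, v ∉ R ∧ insert v R = T :=
      ⟨T.erase v, notMem_erase v T, insert_erase hv⟩
    rw [erase_insert hvR] at ih_erase
    have hedges : ∑ w ∈ R, M v w * (2 * (x v * x w)) ≤
        c * (∑ w ∈ R, M v w) * x v ^ 2 + c⁻¹ * ∑ w ∈ R, M v w * x w ^ 2 := by
      rw [mul_sum, sum_mul, mul_sum, ← sum_add_distrib]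
      gcongr with w _
      nlinarith [hM v w, two_mul_mul_le_add_inv hc (x v) (x w)]
    have hloop : M v v * x v ^ 2 ≤ c * M v v * x v ^ 2 + c⁻¹ * (M v v * x v ^ 2) := by
      nlinarith [mul_nonneg (hM v v) (sq_nonneg (x v)), two_mul_mul_le_add_inv hc 1 1]
    have hdeg : c * (M v v + ∑ w ∈ R, M v w) * x v ^ 2 ≤ c * D * x v ^ 2 := by
      rw [sum_insert hvR] at hvD
      gcongr
    have hrow : 0 ≤ c⁻¹ * ((∑ w ∈ R, M v w) * x v ^ 2) :=
      mul_nonneg (inv_nonneg.2 hc.le) (mul_nonneg (sum_nonneg fun w _ => hM v w) (sq_nonneg _))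
    simp only [sum_insert hvR, sum_add_distrib, add_mul, mul_add, hsymm.apply v, mul_comm _ (x v),
      mul_left_comm _ (2 : ℝ), ← mul_sum] at ih_erase hedges hloop hdeg hrow ⊢
    linarith

end DegenerateMatrix

lemma IsDegenerateOn.rayleighLEOn {α : Type*} [Fintype α] [DecidableEq α] {M : Matrix α α ℝ}
    {X : Finset α} {D : ℝ} (hX : IsDegenerateOn M X D) (hD : 0 < D) (hsymm : M.IsSymm)
    (hM : M ∈ doublyStochastic ℝ α) : RayleighLEOn M X (2 * √D) := by
  intro x hx
  have hx' : ∀ v ∉ X, x v = 0 := fun v hv => hx v (by simpa using hv)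
  have hdot : x ⬝ᵥ x = ∑ v ∈ X, x v ^ 2 := by
    simp only [dotProduct, ← sq]
    exact (sum_subset (subset_univ X) fun v _ hv => by simp [hx' v hv]).symm
  have hquad : x ⬝ᵥ M *ᵥ x = ∑ u ∈ X, ∑ v ∈ X, M u v * (x u * x v) := by
    simp only [dotProduct, Matrix.mulVec, mul_sum]
    rw [← sum_subset (subset_univ X) fun u _ hu => by simp [hx' u hu]]
    refine sum_congr rfl fun u _ => ?_
    rw [← sum_subset (subset_univ X) fun v _ hv => by simp [hx' v hv]]
    exact sum_congr rfl fun v _ => by ring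
  have hrow : ∀ w, ∑ v ∈ X, M w v ≤ 1 := fun w => by
    rw [← sum_row_of_mem_doublyStochastic hM w]
    exact sum_le_univ_sum_of_nonneg fun v => nonneg_of_mem_doublyStochastic hM
  have hsqrt : 0 < √D := Real.sqrt_pos.2 hD
  rw [hquad, hdot]
  calc _ ≤ (√D)⁻¹ * D * ∑ v ∈ X, x v ^ 2 + (√D)⁻¹⁻¹ * ∑ w ∈ X, (∑ v ∈ X, M w v) * x w ^ 2 :=
        hX.sum_sum_le hsymm (fun _ _ => nonneg_of_mem_doublyStochastic hM) (inv_pos.2 hsqrt) x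
    _ ≤ (√D)⁻¹ * D * ∑ v ∈ X, x v ^ 2 + (√D)⁻¹⁻¹ * ∑ w ∈ X, 1 * x w ^ 2 := by
        gcongr with w
        exact hrow w
    _ = 2 * √D * ∑ v ∈ X, x v ^ 2 := by
        have hD' : (√D)⁻¹ * D = √D := by
          rw [inv_mul_eq_iff_eq_mul₀ hsqrt.ne', Real.mul_self_sqrt hD.le]
        simp only [hD', inv_inv, one_mul]
        ring

section DistanceLayers

variable {α : Type*} {G : SimpleGraph α} {T : Finset α} {u v w : α} {i : ℕ}

/-- The vertices of `T` at distance `i` from `u`. -/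
def distLayer (G : SimpleGraph α) (T : Finset α) (u : α) (i : ℕ) : Finset α :=
  {v ∈ T | G.dist u v = i}

lemma mem_distLayer : v ∈ distLayer G T u i ↔ v ∈ T ∧ G.dist u v = i :=
  mem_filter

variable [Fintype α]

lemma card_adj_le_of_mem_distLayer (hG : G.Connected) (hv : v ∈ distLayer G T u i) :
    #{w ∈ T | G.Adj v w} ≤
      #{w ∈ distLayer G T u (i + 1) | G.Adj v w} + #{w | G.Adj v w ∧ G.dist w u ≤ G.dist u v} := by
  rw [mem_distLayer] at hv
  refine (card_le_card fun w hw => ?_).trans (card_union_le _ _)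
  obtain ⟨hwT, hvw⟩ := mem_filter.1 hw
  have h_tri := hG.dist_triangle (u := u) (v := v) (w := w)
  rw [SimpleGraph.dist_eq_one_iff_adj.2 hvw] at h_tri
  simp only [mem_union, mem_filter, mem_distLayer, mem_univ, true_and, hwT, hvw, and_true,
    G.dist_comm (u := w), hv.2]
  lia

lemma card_adj_distLayer_le (hw : w ∈ distLayer G T u (i + 1)) :
    #{v ∈ distLayer G T u i | G.Adj v w} ≤ #{v | G.Adj w v ∧ G.dist v u ≤ G.dist u w} := by
  rw [mem_distLayer] at hw
  refine card_le_card fun v hv => ?_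
  obtain ⟨hv, hvw⟩ := mem_filter.1 hv
  rw [mem_distLayer] at hv
  simp only [mem_filter, mem_univ, true_and, hvw.symm, G.dist_comm (u := v), hv.2, hw.2]
  lia

variable {d r : ℕ} {ε ρ B D : ℝ}

lemma PropP3.card_distLayer_mul_le (hP3 : PropP3 G d ε ρ) (hG : G.Connected)
    (hT : ∀ v ∈ T, D ≤ #{w ∈ T | G.Adj v w}) (u : α) (hi : ((i + 1 : ℕ) : ℝ) ≤ (d : ℝ) ^ ε) :
    #(distLayer G T u i) * (D - ρ * i) ≤ #(distLayer G T u (i + 1)) * (ρ * (i + 1 : ℕ)) := by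
  have h_out : #(distLayer G T u i) * (D - ρ * i) ≤
      ∑ v ∈ distLayer G T u i, (#{w ∈ distLayer G T u (i + 1) | G.Adj v w} : ℝ) := by
    rw [← nsmul_eq_mul]
    refine card_nsmul_le_sum _ _ _ fun v hv => ?_
    obtain ⟨hvT, hdist⟩ := mem_distLayer.1 hv
    have h_split : (#{w ∈ T | G.Adj v w} : ℝ) ≤ #{w ∈ distLayer G T u (i + 1) | G.Adj v w} +
        #{w | G.Adj v w ∧ G.dist w u ≤ G.dist u v} :=
      mod_cast card_adj_le_of_mem_distLayer hG hv
    have h_back := hP3 u v (by rw [hdist]; push_cast at hi; linarith)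
    rw [hdist] at h_back h_split
    linarith [hT v hvT]
  have h_in : ∑ w ∈ distLayer G T u (i + 1), (#{v ∈ distLayer G T u i | G.Adj v w} : ℝ) ≤
      #(distLayer G T u (i + 1)) * (ρ * (i + 1 : ℕ)) := by
    rw [← nsmul_eq_mul]
    refine sum_le_card_nsmul _ _ _ fun w hw => ?_
    have hdist := (mem_distLayer.1 hw).2
    have h_back := hP3 u w (by rwa [hdist])
    rw [← hdist]
    exact le_trans (mod_cast card_adj_distLayer_le hw) h_back
  have h_count : ∑ v ∈ distLayer G T u i, (#{w ∈ distLayer G T u (i + 1) | G.Adj v w} : ℝ) =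
      ∑ w ∈ distLayer G T u (i + 1), (#{v ∈ distLayer G T u i | G.Adj v w} : ℝ) :=
    mod_cast sum_card_bipartiteAbove_eq_sum_card_bipartiteBelow G.Adj
  exact h_out.trans (h_count.trans_le h_in)

lemma PropP3.pow_le_card_distLayer (hP3 : PropP3 G d ε ρ) (hG : G.Connected) (hρ : 0 < ρ)
    (hr : (r : ℝ) ≤ (d : ℝ) ^ ε) (hB : 0 ≤ B) (hD : (B + 1) * (ρ * r) ≤ D)
    (hT : ∀ v ∈ T, D ≤ #{w ∈ T | G.Adj v w}) (hu : u ∈ T) (hi : i ≤ r) :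
    B ^ i ≤ #(distLayer G T u i) := by
  induction i with
  | zero =>
    have h_pos : 0 < #(distLayer G T u 0) := card_pos.2 ⟨u, mem_distLayer.2 ⟨hu, G.dist_self⟩⟩
    exact (pow_zero B).trans_le (mod_cast h_pos)
  | succ i ih =>
    have hir : ((i + 1 : ℕ) : ℝ) ≤ r := mod_cast hi
    have h_pos : 0 < ρ * ((i + 1 : ℕ) : ℝ) := by positivity
    have h_excess : B * (ρ * ((i + 1 : ℕ) : ℝ)) ≤ D - ρ * i := by
      have h_succ : B * (ρ * ((i + 1 : ℕ) : ℝ)) ≤ B * (ρ * r) := by gcongr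
      have h_self : ρ * (i : ℝ) ≤ ρ * r := by gcongr; lia
      linarith
    refine le_of_mul_le_mul_right ?_ h_pos
    calc B ^ (i + 1) * (ρ * ((i + 1 : ℕ) : ℝ)) = B ^ i * (B * (ρ * ((i + 1 : ℕ) : ℝ))) := by ring
      _ ≤ #(distLayer G T u i) * (D - ρ * i) := by
        gcongr
        exact ih (by lia)
      _ ≤ _ := hP3.card_distLayer_mul_le hG hT u (hir.trans hr)

lemma PropP3.exists_card_adj_le (hP3 : PropP3 G d ε ρ) (hG : G.Connected) (hρ : 0 < ρ)
    (hr : (r : ℝ) ≤ (d : ℝ) ^ ε) (hB : 0 ≤ B) (hD : (B + 1) * (ρ * r) ≤ D)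
    (hT : T.Nonempty) (hcard : #T < B ^ r) : ∃ v ∈ T, (#{w ∈ T | G.Adj v w} : ℝ) ≤ D := by
  by_contra! h_dense
  obtain ⟨u, hu⟩ := hT
  have h_layer : B ^ r ≤ #(distLayer G T u r) :=
    hP3.pow_le_card_distLayer hG hρ hr hB hD (fun v hv => (h_dense v hv).le) hu le_rfl
  have h_sub : (#(distLayer G T u r) : ℝ) ≤ #T := mod_cast card_filter_le _ _
  linarith

end DistanceLayers

section SimpleStep

variable {α : Type*} {G : SimpleGraph α} {d : ℕ}

lemma simpleStep_isSymm (G : SimpleGraph α) (d : ℕ) : (simpleStep G d).IsSymm :=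
  Matrix.IsSymm.ext fun u v => by simp only [simpleStep, Matrix.of_apply, G.adj_comm]

lemma simpleStep_nonneg (G : SimpleGraph α) (d : ℕ) (u v : α) : 0 ≤ simpleStep G d u v := by
  simp only [simpleStep, Matrix.of_apply]
  positivity

lemma sum_simpleStep (G : SimpleGraph α) (d : ℕ) (T : Finset α) (v : α) :
    ∑ w ∈ T, simpleStep G d v w = #{w ∈ T | G.Adj v w} / d := by
  simp [simpleStep, ← sum_filter, div_eq_mul_inv]

variable [Fintype α] [DecidableEq α]

lemma simpleStep_mem_doublyStochastic [G.LocallyFinite] (hreg : G.IsRegularOfDegree d)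
    (hd : 0 < d) : simpleStep G d ∈ doublyStochastic ℝ α := by
  have h_row (u : α) : ∑ v, simpleStep G d u v = 1 := by
    have h_deg : #{v | G.Adj u v} = d := by
      rw [← hreg u, ← G.card_neighborFinset_eq_degree]
      congr 1
      ext v
      simp
    rw [sum_simpleStep, h_deg, div_self (by positivity)]
  refine mem_doublyStochastic_iff_sum.2 ⟨simpleStep_nonneg G d, h_row, fun v => ?_⟩
  simpa only [(simpleStep_isSymm G d).apply v] using h_row v

omit [Fintype α] in
lemma lazyStep_eq (G : SimpleGraph α) (d : ℕ) :
    lazyStep G d = (2 : ℝ)⁻¹ • (1 + simpleStep G d) := by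
  ext u v
  simp only [lazyStep, simpleStep, Matrix.of_apply, Matrix.smul_apply, Matrix.add_apply,
    Matrix.one_apply, smul_eq_mul]
  split_ifs <;> ring

lemma SpectralGapLB.hasSpectralGap {g : ℝ} (h : SpectralGapLB G d g) :
    HasSpectralGap (simpleStep G d) (2 * g) := by
  intro x hx
  have h_lazy : ∑ u, ∑ v, x u * lazyStep G d u v * x v = x ⬝ᵥ lazyStep G d *ᵥ x := by
    simp only [dotProduct, Matrix.mulVec, mul_sum, mul_assoc]
  have h_norm : ∑ v, x v ^ 2 = x ⬝ᵥ x := by simp only [dotProduct, sq]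
  have h_gap := h x hx
  rw [h_lazy, h_norm, lazyStep_eq, Matrix.smul_mulVec, Matrix.add_mulVec, Matrix.one_mulVec,
    dotProduct_smul, dotProduct_add, smul_eq_mul] at h_gap
  rw [dirichletForm_apply, Matrix.sub_mulVec, Matrix.one_mulVec, dotProduct_sub]
  linarith

omit [DecidableEq α] in
lemma PropP3.isDegenerateOn_simpleStep {X : Finset α} {ε ρ B D : ℝ} {r : ℕ}
    (hP3 : PropP3 G d ε ρ) (hG : G.Connected) (hρ : 0 < ρ) (hr : (r : ℝ) ≤ (d : ℝ) ^ ε)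
    (hB : 0 ≤ B) (hD : (B + 1) * (ρ * r) ≤ D) (hX : #X < B ^ r) :
    IsDegenerateOn (simpleStep G d) X (D / d) := by
  intro T hTX hT
  have hcard : (#T : ℝ) < B ^ r := lt_of_le_of_lt (mod_cast card_le_card hTX) hX
  obtain ⟨v, hv, hvD⟩ := hP3.exists_card_adj_le hG hρ hr hB hD hT hcard
  refine ⟨v, hv, ?_⟩
  rw [sum_simpleStep]
  gcongr

end SimpleStep

section ClosedNeighbourhood

variable {α : Type*} {G : SimpleGraph α} [G.LocallyFinite] [DecidableEq α] {d : ℕ}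

/-- `S` together with all neighbours of its elements. -/
def closedNbhd (G : SimpleGraph α) [G.LocallyFinite] (S : Finset α) : Finset α :=
  S ∪ S.biUnion fun v => G.neighborFinset v

lemma subset_closedNbhd (S : Finset α) : S ⊆ closedNbhd G S :=
  subset_union_left

lemma mem_closedNbhd_of_adj {S : Finset α} {v w : α} (hv : v ∈ S) (h : G.Adj v w) :
    w ∈ closedNbhd G S :=
  mem_union_right _ (mem_biUnion.2 ⟨v, hv, (G.mem_neighborFinset v w).2 h⟩)

lemma card_closedNbhd_le (hdeg : ∀ v, G.degree v ≤ d) (S : Finset α) :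
    #(closedNbhd G S) ≤ (d + 1) * #S :=
  calc #(closedNbhd G S) ≤ #S + #S * d :=
        (card_union_le _ _).trans (by gcongr; exact card_biUnion_le_card_mul _ _ _ fun v _ =>
          (G.card_neighborFinset_eq_degree v).trans_le (hdeg v))
    _ = (d + 1) * #S := by ring

lemma card_iterate_closedNbhd_le (hdeg : ∀ v, G.degree v ≤ d) (S : Finset α) (j : ℕ) :
    #((closedNbhd G)^[j] S) ≤ (d + 1) ^ j * #S := by
  induction j with
  | zero => simp
  | succ j ih =>
    rw [Function.iterate_succ_apply', pow_succ', mul_assoc]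
    exact (card_closedNbhd_le hdeg _).trans (by gcongr)

lemma iterate_closedNbhd_mono (S : Finset α) : Monotone fun j => (closedNbhd G)^[j] S :=
  monotone_nat_of_le_succ fun j => by
    rw [Function.iterate_succ_apply']
    exact subset_closedNbhd _

lemma simpleStep_pow_mulVec_eq_zero [Fintype α] {S : Finset α} {b : α → ℝ}
    (hb : ∀ v ∉ S, b v = 0) {j : ℕ} {v : α} (hv : v ∉ (closedNbhd G)^[j] S) :
    (simpleStep G d ^ j *ᵥ b) v = 0 := by
  induction j generalizing v with
  | zero => simpa using hb v hv
  | succ j ih =>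
    rw [pow_succ', ← Matrix.mulVec_mulVec]
    refine sum_eq_zero fun w _ => ?_
    by_cases hw : w ∈ (closedNbhd G)^[j] S
    · have hvw : ¬G.Adj v w := fun h => hv (by
        rw [Function.iterate_succ_apply']
        exact mem_closedNbhd_of_adj hw h.symm)
      simp [simpleStep, hvw]
    · rw [ih hw, mul_zero]

end ClosedNeighbourhood

section ConnectedSets

variable {α : Type*} {G : SimpleGraph α} {S T : Finset α}

lemma exists_adj_of_connected_induce (hS : (G.induce (S : Set α)).Connected)
    (h_inter : ∃ v ∈ S, v ∈ T) (h_sub : ¬S ⊆ T) :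
    ∃ x ∈ T, ∃ y ∈ S, y ∉ T ∧ G.Adj x y := by
  obtain ⟨v, hv, hvT⟩ := h_inter
  obtain ⟨w, hw, hwT⟩ := not_subset.1 h_sub
  obtain ⟨p⟩ := hS.preconnected ⟨v, hv⟩ ⟨w, hw⟩
  obtain ⟨e, -, h_fst, h_snd⟩ := p.exists_boundary_dart {z | (z : α) ∈ T} hvT hwT
  exact ⟨e.fst, h_fst, e.snd, e.snd.2, h_snd, e.adj⟩

lemma connected_induce_insert [DecidableEq α] {v w : α}
    (hT : (G.induce (T : Set α)).Connected) (hv : v ∈ T) (hvw : G.Adj v w) :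
    (G.induce ((insert w T : Finset α) : Set α)).Connected := by
  rw [coe_insert, Set.insert_eq, Set.union_comm]
  exact SimpleGraph.connected_induce_union hT.preconnected
    SimpleGraph.Preconnected.of_subsingleton hv (Set.mem_singleton w) hvw

lemma exists_connected_subset_card_eq (hS : (G.induce (S : Set α)).Connected) {k : ℕ}
    (hk : 1 ≤ k) (hkS : k ≤ #S) : ∃ T ⊆ S, (G.induce (T : Set α)).Connected ∧ #T = k := by
  classical
  induction k, hk using Nat.le_induction with
  | base =>
    obtain ⟨v, hv⟩ : S.Nonempty := card_pos.1 hkS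
    refine ⟨{v}, singleton_subset_iff.2 hv, ?_, card_singleton v⟩
    rw [coe_singleton]
    exact ⟨SimpleGraph.Preconnected.of_subsingleton⟩
  | succ k hk ih =>
    obtain ⟨T, hTS, hT, hTk⟩ := ih (by lia)
    obtain ⟨v, hv⟩ : T.Nonempty := card_pos.1 (by lia)
    have h_sub : ¬S ⊆ T := fun h => by have := card_le_card h; lia
    obtain ⟨x, hx, y, hy, hyT, hxy⟩ := exists_adj_of_connected_induce hS ⟨v, hTS hv, hv⟩ h_sub
    exact ⟨insert y T, insert_subset hy hTS, connected_induce_insert hT hx hxy,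
      by rw [card_insert_of_notMem hyT, hTk]⟩

variable [Fintype α] [DecidableEq α] {k : ℕ}

/-- The `k`-element vertex sets inducing a connected subgraph. -/
def connectedSets (G : SimpleGraph α) (k : ℕ) : Finset (Finset α) :=
  {S | (G.induce (S : Set α)).Connected ∧ #S = k}

lemma mem_connectedSets {S : Finset α} :
    S ∈ connectedSets G k ↔ (G.induce (S : Set α)).Connected ∧ #S = k := by
  simp only [connectedSets, mem_filter, mem_univ, true_and]

end ConnectedSets

section Percolation

variable {α : Type*} [Fintype α] {p : ℝ}

/-- Probability of the configuration `ω` in Bernoulli site percolation with parameter `p`. -/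
def percolationWeight (p : ℝ) (ω : Finset α) : ℝ :=
  p ^ #ω * (1 - p) ^ (Fintype.card α - #ω)

lemma percolationWeight_nonneg (hp₀ : 0 ≤ p) (hp₁ : p ≤ 1) (ω : Finset α) :
    0 ≤ percolationWeight p ω := by
  have := sub_nonneg.2 hp₁
  unfold percolationWeight
  positivity

lemma sum_percolationWeight (p : ℝ) : ∑ ω : Finset α, percolationWeight p ω = 1 := by
  simp only [percolationWeight, Fintype.sum_pow_mul_eq_add_pow, add_sub_cancel, one_pow]

variable [DecidableEq α]

lemma sum_Icc_percolationWeight (p : ℝ) {S R : Finset α} (hSR : S ⊆ R) :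
    ∑ ω ∈ Icc S R, percolationWeight p ω = p ^ #S * (1 - p) ^ #Rᶜ := by
  have h_disj {ω : Finset α} (hω : ω ∈ (R \ S).powerset) : Disjoint S ω :=
    disjoint_sdiff.mono_right (mem_powerset.1 hω)
  have h_inj : Set.InjOn (S ∪ ·) ((R \ S).powerset : Set (Finset α)) := fun ω hω ω' hω' h => by
    rw [← union_sdiff_cancel_left (h_disj hω), ← union_sdiff_cancel_left (h_disj hω')]
    exact congrArg (· \ S) h
  have h_weight (ω) (hω : ω ∈ (R \ S).powerset) : percolationWeight p (S ∪ ω) =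
      p ^ #S * (1 - p) ^ #Rᶜ * (p ^ #ω * (1 - p) ^ (#(R \ S) - #ω)) := by
    have h_exp : Fintype.card α - (#S + #ω) = #Rᶜ + (#(R \ S) - #ω) := by
      have hω_le := card_le_card (mem_powerset.1 hω)
      have hR := card_add_card_compl R
      have hS := card_sdiff_add_card_eq_card hSR
      lia
    rw [percolationWeight, card_union_of_disjoint (h_disj hω), h_exp, pow_add, pow_add]
    ring
  rw [Icc_eq_image_powerset hSR, sum_image h_inj, sum_congr rfl h_weight, ← mul_sum,
    sum_pow_mul_eq_add_pow, add_sub_cancel, one_pow, mul_one]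

variable {G : SimpleGraph α} [G.LocallyFinite] {d k : ℕ}

/-- The percolation configurations that contain `S` but no vertex outside `S` adjacent to it, so
that a connected `S` is one of their clusters. -/
def clusterConfigs (G : SimpleGraph α) [G.LocallyFinite] (S : Finset α) : Finset (Finset α) :=
  Icc S (closedNbhd G S \ S)ᶜ

lemma subset_of_mem_clusterConfigs {S T ω : Finset α} {v : α} (hvS : v ∈ S) (hvT : v ∈ T)
    (hT : (G.induce (T : Set α)).Connected) (hωS : ω ∈ clusterConfigs G S)
    (hωT : ω ∈ clusterConfigs G T) : T ⊆ S := by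
  by_contra h_sub
  obtain ⟨x, hx, y, hy, hyS, hxy⟩ := exists_adj_of_connected_induce hT ⟨v, hvT, hvS⟩ h_sub
  have h_closed := (mem_Icc.1 hωS).2 ((mem_Icc.1 hωT).1 hy)
  exact mem_compl.1 h_closed (mem_sdiff.2 ⟨mem_closedNbhd_of_adj hx hxy, hyS⟩)

lemma pow_mul_pow_le_sum_clusterConfigs (hdeg : ∀ v, G.degree v ≤ d) (hp₀ : 0 ≤ p) (hp₁ : p ≤ 1)
    (S : Finset α) :
    p ^ #S * (1 - p) ^ (d * #S) ≤ ∑ ω ∈ clusterConfigs G S, percolationWeight p ω := by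
  have h_boundary : #(closedNbhd G S \ S) ≤ d * #S := by
    rw [card_sdiff_of_subset (subset_closedNbhd S), Nat.sub_le_iff_le_add, ← Nat.succ_mul]
    exact card_closedNbhd_le hdeg S
  have h_sub : S ⊆ (closedNbhd G S \ S)ᶜ := fun v hv => by simp [hv]
  rw [clusterConfigs, sum_Icc_percolationWeight p h_sub, compl_compl]
  exact mul_le_mul_of_nonneg_left
    (pow_le_pow_of_le_one (sub_nonneg.2 hp₁) (by linarith) h_boundary) (by positivity)

/-- The connected sets through `v` are the possible clusters of `v` in site percolation, so their
probabilities add up to at most one. -/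
lemma card_connectedSets_mem_mul_le_one (hdeg : ∀ v, G.degree v ≤ d) (hp₀ : 0 ≤ p) (hp₁ : p ≤ 1)
    (v : α) : #{S ∈ connectedSets G k | v ∈ S} * (p ^ k * (1 - p) ^ (d * k)) ≤ 1 := by
  have h_disj : (({S ∈ connectedSets G k | v ∈ S} : Finset (Finset α)) :
      Set (Finset α)).PairwiseDisjoint (clusterConfigs G) := by
    intro S hS T hT hST
    simp only [coe_filter, mem_connectedSets, Set.mem_ofPred_eq] at hS hT
    rw [Function.onFun, disjoint_left]
    exact fun ω hωS hωT => hST <| (subset_of_mem_clusterConfigs hT.2 hS.2 hS.1.1 hωT hωS).antisymm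
      (subset_of_mem_clusterConfigs hS.2 hT.2 hT.1.1 hωS hωT)
  rw [← nsmul_eq_mul]
  calc #{S ∈ connectedSets G k | v ∈ S} • (p ^ k * (1 - p) ^ (d * k))
      ≤ ∑ S ∈ connectedSets G k with v ∈ S, ∑ ω ∈ clusterConfigs G S, percolationWeight p ω := by
        refine card_nsmul_le_sum _ _ _ fun S hS => ?_
        rw [← (mem_connectedSets.1 (mem_filter.1 hS).1).2]
        exact pow_mul_pow_le_sum_clusterConfigs hdeg hp₀ hp₁ S
    _ ≤ ∑ ω, percolationWeight p ω := by
        rw [← sum_biUnion h_disj]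
        exact sum_le_sum_of_subset_of_nonneg (subset_univ _)
          fun ω _ _ => percolationWeight_nonneg hp₀ hp₁ ω
    _ = 1 := sum_percolationWeight p

omit [Fintype α] [DecidableEq α] in
lemma exp_neg_two_mul_le_one_sub (hp₀ : 0 ≤ p) (hp : p ≤ 1 / 2) : Real.exp (-(2 * p)) ≤ 1 - p := by
  rw [Real.exp_neg, inv_le_comm₀ (Real.exp_pos _) (by linarith)]
  refine le_trans ?_ (Real.add_one_le_exp _)
  rw [inv_le_iff_one_le_mul₀ (by linarith)]
  nlinarith

lemma card_connectedSets_le (hdeg : ∀ v, G.degree v ≤ d) (hd : 2 ≤ d) (hk : 1 ≤ k) :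
    #(connectedSets G k) ≤ Fintype.card α * (Real.exp 2 * d) ^ k := by
  have hp : (d : ℝ)⁻¹ ≤ 1 / 2 := by
    rw [one_div]
    exact inv_anti₀ two_pos (mod_cast hd)
  have h_weight : (Real.exp 2 * d)⁻¹ ^ k ≤ (d : ℝ)⁻¹ ^ k * (1 - (d : ℝ)⁻¹) ^ (d * k) := by
    have h_one_sub : (Real.exp 2)⁻¹ ≤ (1 - (d : ℝ)⁻¹) ^ d :=
      calc (Real.exp 2)⁻¹ = Real.exp (-(2 * (d : ℝ)⁻¹)) ^ d := by
            rw [← Real.exp_neg, ← Real.exp_nat_mul]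
            field_simp
        _ ≤ (1 - (d : ℝ)⁻¹) ^ d := by gcongr; exact exp_neg_two_mul_le_one_sub (by positivity) hp
    rw [mul_inv, mul_pow, pow_mul, mul_comm]
    gcongr
  have h_rooted (v : α) : (#{S ∈ connectedSets G k | v ∈ S} : ℝ) ≤ (Real.exp 2 * d) ^ k := by
    have h := card_connectedSets_mem_mul_le_one (k := k) hdeg (p := (d : ℝ)⁻¹) (by positivity)
      (by linarith) v
    have h_inv := (mul_le_mul_of_nonneg_left h_weight (by positivity)).trans h
    rwa [inv_pow, ← div_eq_mul_inv, div_le_one (by positivity)] at h_inv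
  have h_cover : connectedSets G k ⊆ univ.biUnion fun v => {S ∈ connectedSets G k | v ∈ S} := by
    intro S hS
    obtain ⟨v, hv⟩ : S.Nonempty := card_pos.1 ((mem_connectedSets.1 hS).2 ▸ hk)
    exact mem_biUnion.2 ⟨v, mem_univ _, mem_filter.2 ⟨hS, hv⟩⟩
  calc (#(connectedSets G k) : ℝ) ≤ ∑ v, (#{S ∈ connectedSets G k | v ∈ S} : ℝ) :=
        mod_cast (card_le_card h_cover).trans card_biUnion_le
    _ ≤ ∑ _v : α, (Real.exp 2 * d) ^ k := sum_le_sum fun v _ => h_rooted v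
    _ = Fintype.card α * (Real.exp 2 * d) ^ k := by simp

end Percolation

section VacantComponents

variable {α : Type*} [Fintype α] [DecidableEq α] {G : SimpleGraph α} [G.LocallyFinite]
  {d k r J : ℕ} {g ε ρ B θ η κ K : ℝ}

lemma rayleighLEOn_simpleStep_compl (hreg : G.IsRegularOfDegree d) (hd : 0 < d)
    (hG : G.Connected) (hgap : SpectralGapLB G d g) (hg : 0 < g) (hP3 : PropP3 G d ε ρ)
    (hρ : 0 < ρ) {S : Finset α} (hS : S.Nonempty) (hr : (r : ℝ) ≤ (d : ℝ) ^ ε) (hB : 0 ≤ B)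
    (hθ : 0 < θ) (hrθ : 4 * (B + 1) * (ρ * r) ≤ θ ^ 2 * d)
    (hSr : ((d : ℝ) + 1) ^ J * #S < B ^ r) (hη : η ≤ 1 / 6) (hθη : θ ≤ η)
    (hJ : (θ ^ J) ^ 2 ≤ 2 * g * η ^ 2) (hSη : #S ≤ η * (2 * g) * Fintype.card α) :
    RayleighLEOn (simpleStep G d) (S : Set α)ᶜ (1 - #S / Fintype.card α * (1 - 6 * η)) := by
  have hM := simpleStep_mem_doublyStochastic hreg hd
  have hsymm := simpleStep_isSymm G d
  have : (0 : ℝ) < d := mod_cast hd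
  have h_card : (#((closedNbhd G)^[J] S) : ℝ) < B ^ r :=
    lt_of_le_of_lt (mod_cast card_iterate_closedNbhd_le (fun v => (hreg v).le) S J) hSr
  have h_deg : IsDegenerateOn (simpleStep G d) ((closedNbhd G)^[J] S) (θ ^ 2 * d / 4 / d) :=
    hP3.isDegenerateOn_simpleStep hG hρ hr hB (by linarith) h_card
  have h_theta : 2 * √(θ ^ 2 * d / 4 / d) = θ := by
    rw [show θ ^ 2 * d / 4 / d = (θ / 2) ^ 2 by field_simp; norm_num,
      Real.sqrt_sq (by positivity)]
    ring
  have h_near := h_theta ▸ h_deg.rayleighLEOn (by positivity) hsymm hM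
  refine hgap.hasSpectralGap.rayleighLEOn_compl (by positivity) hM hsymm hS h_near hθ ?_ hη hθη
    hJ hSη
  exact fun j hj v hv => simpleStep_pow_mulVec_eq_zero (fun w hw => Set.indicator_of_notMem hw _)
    fun h => hv (iterate_closedNbhd_mono S hj h)

lemma walkProb_bigVacantComponent_le (hreg : G.IsRegularOfDegree d) (hd : 2 ≤ d) (hK : 0 < K)
    (h : ∀ S : Finset α, #S = ⌈K⌉₊ → RayleighLEOn (simpleStep G d) (S : Set α)ᶜ (1 - κ))
    (u : α) (t : ℕ) :
    walkProb (simpleStep G d) u t (fun p => bigVacantComponent G p 0 K) ≤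
      Fintype.card α * (Real.exp 2 * d) ^ ⌈K⌉₊ *
        (Real.exp (-κ * t) * √(Fintype.card α)) := by
  have hk : 1 ≤ ⌈K⌉₊ := Nat.ceil_pos.2 hK
  have h_sub (p : Fin (t + 1) → α) (hp : bigVacantComponent G p 0 K) :
      ∃ S ∈ connectedSets G ⌈K⌉₊, ∀ s, p s ∉ S := by
    obtain ⟨T, h_vacant, hT, hKT⟩ := hp
    obtain ⟨S, hST, hS⟩ := exists_connected_subset_card_eq hT hk (Nat.ceil_le.2 hKT)
    exact ⟨S, mem_connectedSets.2 hS, fun s hs => h_vacant _ (hST hs) s (Nat.zero_le _) rfl⟩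
  calc walkProb (simpleStep G d) u t (fun p => bigVacantComponent G p 0 K)
      ≤ ∑ S ∈ connectedSets G ⌈K⌉₊, avoidProb (simpleStep G d) S t u :=
        walkProb_le_sum_of_exists (simpleStep_nonneg G d) u t h_sub
    _ ≤ ∑ _S ∈ connectedSets G ⌈K⌉₊, Real.exp (-κ * t) * √(Fintype.card α) :=
        sum_le_sum fun S hS => (h S (mem_connectedSets.1 hS).2).avoidProb_le
          (simpleStep_isSymm G d) (simpleStep_nonneg G d) t u
    _ ≤ _ := by
        rw [sum_const, nsmul_eq_mul]
        gcongr
        exact card_connectedSets_le (fun v => (hreg v).le) hd hk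

end VacantComponents

section PowerAsymptotics

lemma eventually_mul_rpow_le_rpow (C : ℝ) {p q : ℝ} (h : p < q) :
    ∀ᶠ x : ℝ in atTop, C * x ^ p ≤ x ^ q := by
  filter_upwards [(tendsto_rpow_atTop (sub_pos.2 h)).eventually_ge_atTop C,
    eventually_gt_atTop 0] with x hC hx
  calc C * x ^ p ≤ x ^ (q - p) * x ^ p := by gcongr
    _ = x ^ q := by rw [← Real.rpow_add hx, sub_add_cancel]

lemma eventually_mul_rpow_neg_mul_log_le_one (C : ℝ) {a : ℝ} (ha : 0 < a) :
    ∀ᶠ x : ℝ in atTop, C * x ^ (-a) * Real.log x ≤ 1 := by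
  have h_lim : Tendsto (fun x : ℝ => C * (Real.log x / x ^ a)) atTop (nhds (C * 0)) :=
    (isLittleO_log_rpow_atTop ha).tendsto_div_nhds_zero.const_mul C
  rw [mul_zero] at h_lim
  filter_upwards [h_lim.eventually_le_const one_pos, eventually_gt_atTop 0] with x h hx
  rw [Real.rpow_neg hx.le]
  calc C * (x ^ a)⁻¹ * Real.log x = C * (Real.log x / x ^ a) := by ring
    _ ≤ 1 := h

lemma le_pow_ceil_log {B y : ℝ} (hB : Real.exp 1 ≤ B) (hy : 0 < y) : y ≤ B ^ ⌈Real.log y⌉₊ :=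
  calc y = Real.exp (Real.log y) := (Real.exp_log hy).symm
    _ ≤ Real.exp (⌈Real.log y⌉₊ * 1) := by
      rw [mul_one]
      exact Real.exp_le_exp.2 (Nat.le_ceil _)
    _ = Real.exp 1 ^ ⌈Real.log y⌉₊ := Real.exp_nat_mul _ _
    _ ≤ B ^ ⌈Real.log y⌉₊ := by gcongr

lemma mul_pow_mul_exp_mul_sqrt_eq {N x : ℝ} (hN : 0 < N) (hx : 0 < x) (k : ℕ) (s : ℝ) :
    N * (Real.exp 2 * x) ^ k * (Real.exp s * √N) =
      Real.exp (3 / 2 * Real.log N + k * (2 + Real.log x) + s) := by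
  have h_sqrt : √N = Real.exp (1 / 2 * Real.log N) := by
    rw [Real.sqrt_eq_rpow, Real.rpow_def_of_pos hN, mul_comm]
  have h_exp : 3 / 2 * Real.log N + k * (2 + Real.log x) + s =
      Real.log N + k * (2 + Real.log x) + (s + 1 / 2 * Real.log N) := by ring
  rw [h_exp, Real.exp_add, Real.exp_add, Real.exp_add, Real.exp_nat_mul, Real.exp_add, ← h_sqrt,
    Real.exp_log hN, Real.exp_log hx]

end PowerAsymptotics

section ParameterSequences

variable {ι : Type*} {l : Filter ι} {x ε N : ι → ℝ} {a c δ ρ : ℝ}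

lemma tendsto_rpow_half_atTop (hx : Tendsto x l atTop)
    (hεx : Tendsto (fun i => ε i * Real.log (x i)) l atTop) :
    Tendsto (fun i => x i ^ (ε i / 2)) l atTop := by
  have h_exp : Tendsto (fun i => Real.exp (ε i * Real.log (x i) * (1 / 2))) l atTop :=
    Real.tendsto_exp_atTop.comp (hεx.atTop_mul_const one_half_pos)
  refine h_exp.congr' ?_
  filter_upwards [hx.eventually_gt_atTop 0] with i hi
  rw [Real.rpow_def_of_pos hi]
  congr 1
  ring

lemma eventually_log_log_le_rpow_half (hx : Tendsto x l atTop)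
    (hεx : Tendsto (fun i => ε i * Real.log (x i)) l atTop) (hN : Tendsto N l atTop)
    (hNx : Tendsto (fun i => Real.log (Real.log (N i)) ^ (2 / ε i) / x i) l (nhds 0)) :
    ∀ᶠ i in l, Real.log (Real.log (N i)) ≤ x i ^ (ε i / 2) := by
  filter_upwards [hNx.eventually_le_const one_pos, hx.eventually_gt_atTop 1,
    hεx.eventually_gt_atTop 0, (Real.tendsto_log_atTop.comp hN).eventually_ge_atTop 1]
    with i h_le hxi hεi hNi
  have hε : 0 < ε i := pos_of_mul_pos_left hεi (Real.log_nonneg hxi.le)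
  have h_loglog : 0 ≤ Real.log (Real.log (N i)) := Real.log_nonneg hNi
  rw [div_le_one (by linarith)] at h_le
  calc Real.log (Real.log (N i)) = (Real.log (Real.log (N i)) ^ (2 / ε i)) ^ (ε i / 2) := by
        rw [← Real.rpow_mul h_loglog, div_mul_div_cancel₀ hε.ne', div_self two_ne_zero,
          Real.rpow_one]
    _ ≤ x i ^ (ε i / 2) := by gcongr

/-- The number of distance layers used in a graph on `N` vertices. It is at most of order `d ^ ε`,
the range of property P3, while layers growing by a factor `d ^ (1 / 10)` reach a size which exceeds
that of the `30`-th neighbourhood of any set of order `log N`. -/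
def layerCount (N : ℝ) : ℕ :=
  310 + ⌈Real.log (Real.log N)⌉₊

lemma eventually_layerCount_le (hx : Tendsto x l atTop)
    (hεx : Tendsto (fun i => ε i * Real.log (x i)) l atTop) (hN : Tendsto N l atTop)
    (hNx : Tendsto (fun i => Real.log (Real.log (N i)) ^ (2 / ε i) / x i) l (nhds 0)) :
    ∀ᶠ i in l, (layerCount (N i) : ℝ) ≤ 2 * x i ^ (ε i / 2) := by
  filter_upwards [eventually_log_log_le_rpow_half hx hεx hN hNx,
    (tendsto_rpow_half_atTop hx hεx).eventually_ge_atTop 311,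
    (Real.tendsto_log_atTop.comp hN).eventually_ge_atTop 1] with i h_loglog h_large hNi
  have h_ceil : (⌈Real.log (Real.log (N i))⌉₊ : ℝ) < Real.log (Real.log (N i)) + 1 :=
    Nat.ceil_lt_add_one (Real.log_nonneg hNi)
  rw [layerCount]
  push_cast
  linarith

lemma eventually_layerCount_le_rpow (hx : Tendsto x l atTop)
    (hεx : Tendsto (fun i => ε i * Real.log (x i)) l atTop) (hN : Tendsto N l atTop)
    (hNx : Tendsto (fun i => Real.log (Real.log (N i)) ^ (2 / ε i) / x i) l (nhds 0)) :
    ∀ᶠ i in l, (layerCount (N i) : ℝ) ≤ x i ^ ε i := by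
  filter_upwards [eventually_layerCount_le hx hεx hN hNx,
    (tendsto_rpow_half_atTop hx hεx).eventually_ge_atTop 2, hx.eventually_gt_atTop 0]
    with i h_le h_two hxi
  calc (layerCount (N i) : ℝ) ≤ x i ^ (ε i / 2) * x i ^ (ε i / 2) := h_le.trans (by gcongr)
    _ = x i ^ ε i := by rw [← Real.rpow_add hxi, add_halves]

lemma eventually_mul_layerCount_le (hρ : 0 ≤ ρ) (hx : Tendsto x l atTop) (hε : ∀ i, ε i ≤ 1)
    (hεx : Tendsto (fun i => ε i * Real.log (x i)) l atTop) (hN : Tendsto N l atTop)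
    (hNx : Tendsto (fun i => Real.log (Real.log (N i)) ^ (2 / ε i) / x i) l (nhds 0)) :
    ∀ᶠ i in l, 4 * (x i ^ (1 / 10 : ℝ) + 1) * (ρ * layerCount (N i)) ≤
      (x i ^ (-(1 / 10) : ℝ)) ^ 2 * x i := by
  filter_upwards [eventually_layerCount_le hx hεx hN hNx, hx.eventually_ge_atTop 1,
    hx.eventually (eventually_mul_rpow_le_rpow (16 * ρ)
      (show (1 / 10 + 1 / 2 : ℝ) < -(1 / 10) * 2 + 1 by norm_num))] with i h_le hxi h_pow
  have hx₀ : 0 < x i := one_pos.trans_le hxi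
  have h_one : 1 ≤ x i ^ (1 / 10 : ℝ) := Real.one_le_rpow hxi (by norm_num)
  have h_half : x i ^ (ε i / 2) ≤ x i ^ (1 / 2 : ℝ) := by
    gcongr
    exact hε i
  calc 4 * (x i ^ (1 / 10 : ℝ) + 1) * (ρ * layerCount (N i))
      ≤ 4 * (x i ^ (1 / 10 : ℝ) + x i ^ (1 / 10 : ℝ)) * (ρ * (2 * x i ^ (1 / 2 : ℝ))) := by
        gcongr
        linarith
    _ = 16 * ρ * x i ^ (1 / 10 + 1 / 2 : ℝ) := by
        rw [Real.rpow_add hx₀]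
        ring
    _ ≤ x i ^ (-(1 / 10) * 2 + 1 : ℝ) := h_pow
    _ = (x i ^ (-(1 / 10) : ℝ)) ^ 2 * x i := by
        rw [Real.rpow_add hx₀, Real.rpow_mul hx₀.le, Real.rpow_two, Real.rpow_one]

lemma ceil_mul_log_le {n : ℝ} (hδ : 0 ≤ δ) (hn : 1 ≤ Real.log n) :
    (⌈δ * Real.log n⌉₊ : ℝ) ≤ (δ + 1) * Real.log n := by
  linarith [Nat.ceil_lt_add_one (show 0 ≤ δ * Real.log n by positivity)]

lemma eventually_pow_mul_ceil_lt (hδ : 0 ≤ δ) (hx : Tendsto x l atTop) (hN : Tendsto N l atTop) :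
    ∀ᶠ i in l, (x i + 1) ^ 30 * ⌈δ * Real.log (N i)⌉₊ <
      (x i ^ (1 / 10 : ℝ)) ^ layerCount (N i) := by
  filter_upwards [hx.eventually_gt_atTop (max 1 (2 ^ 30 * (δ + 1))),
    hx.eventually ((tendsto_rpow_atTop (show (0 : ℝ) < 1 / 10 by norm_num)).eventually_ge_atTop
      (Real.exp 1)),
    (Real.tendsto_log_atTop.comp hN).eventually_ge_atTop 1] with i hxi h_base hNi
  rw [Function.comp_apply] at hNi
  obtain ⟨hx₁, hxδ⟩ := max_lt_iff.1 hxi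
  have hx₀ : 0 < x i := one_pos.trans hx₁
  have hlog : 0 < Real.log (N i) := one_pos.trans_le hNi
  have h_pow : x i ^ 31 = (x i ^ (1 / 10 : ℝ)) ^ 310 := by
    rw [← Real.rpow_mul_natCast hx₀.le, ← Real.rpow_natCast]
    norm_num
  calc (x i + 1) ^ 30 * ⌈δ * Real.log (N i)⌉₊
      ≤ (x i + x i) ^ 30 * ((δ + 1) * Real.log (N i)) := by
        gcongr
        exact ceil_mul_log_le hδ hNi
    _ = x i ^ 30 * (2 ^ 30 * (δ + 1)) * Real.log (N i) := by ring
    _ < x i ^ 30 * x i * Real.log (N i) := by gcongr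
    _ = x i ^ 31 * Real.log (N i) := by ring
    _ ≤ x i ^ 31 * (x i ^ (1 / 10 : ℝ)) ^ ⌈Real.log (Real.log (N i))⌉₊ := by
        gcongr
        exact le_pow_ceil_log h_base hlog
    _ = (x i ^ (1 / 10 : ℝ)) ^ layerCount (N i) := by rw [h_pow, layerCount, pow_add]

variable {c₁ c₂ ρ₁ : ℝ}

lemma pow_five_mul_log_le {y n : ℝ} (hy : 0 ≤ y) (hn : 1 ≤ n) (hlog : 0 < Real.log n)
    (h : y ≤ c₂ * (n / Real.log n) ^ (1 / 5 : ℝ)) : y ^ 5 * Real.log n ≤ c₂ ^ 5 * n := by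
  have h_pow := pow_le_pow_left₀ hy h 5
  have h_root : ((n / Real.log n) ^ (1 / 5 : ℝ)) ^ 5 = n / Real.log n := by
    rw [← Real.rpow_mul_natCast (by positivity)]
    norm_num
  rwa [mul_pow, h_root, ← mul_div_assoc, le_div_iff₀ hlog] at h_pow

lemma eventually_ceil_le (hδ : 0 ≤ δ) (hc₁ : 0 < c₁) (ha : ρ₁ + a < 5) (hx : Tendsto x l atTop)
    (hN : Tendsto N l atTop)
    (hxN : ∀ᶠ i in l, x i ≤ c₂ * (N i / Real.log (N i)) ^ (1 / 5 : ℝ)) :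
    ∀ᶠ i in l, (⌈δ * Real.log (N i)⌉₊ : ℝ) ≤ x i ^ (-a) * (2 * (c₁ / x i ^ ρ₁)) * N i := by
  filter_upwards [hxN, hx.eventually_gt_atTop 0, hN.eventually_ge_atTop 1,
    (Real.tendsto_log_atTop.comp hN).eventually_ge_atTop 1,
    hx.eventually (eventually_mul_rpow_le_rpow ((δ + 1) * c₂ ^ 5 / (2 * c₁)) ha)]
    with i hxNi hxi hNi hlogN h_pow
  have h_size := ceil_mul_log_le hδ hlogN
  have h_deg := pow_five_mul_log_le hxi.le hNi (one_pos.trans_le hlogN) hxNi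
  have h_split : x i ^ (-a) * (2 * (c₁ / x i ^ ρ₁)) * N i = 2 * c₁ * N i / x i ^ (ρ₁ + a) := by
    rw [Real.rpow_neg hxi.le, Real.rpow_add hxi]
    field_simp
  rw [h_split, le_div_iff₀ (by positivity)]
  rw [div_mul_eq_mul_div, div_le_iff₀ (by positivity)] at h_pow
  norm_cast at h_pow
  refine le_of_mul_le_mul_right ?_ (pow_pos hxi 5)
  calc ⌈δ * Real.log (N i)⌉₊ * x i ^ (ρ₁ + a) * x i ^ 5
      ≤ (δ + 1) * Real.log (N i) * x i ^ (ρ₁ + a) * x i ^ 5 := by gcongr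
    _ = (δ + 1) * x i ^ (ρ₁ + a) * (x i ^ 5 * Real.log (N i)) := by ring
    _ ≤ (δ + 1) * x i ^ (ρ₁ + a) * (c₂ ^ 5 * N i) := by gcongr
    _ = (δ + 1) * c₂ ^ 5 * x i ^ (ρ₁ + a) * N i := by ring
    _ ≤ x i ^ 5 * (2 * c₁) * N i := by gcongr
    _ = 2 * c₁ * N i * x i ^ 5 := by ring

lemma eventually_rpow_pow_sq_le (hc₁ : 0 < c₁) (ha : ρ₁ + 2 * a < 6) :
    ∀ᶠ y : ℝ in atTop, ((y ^ (-(1 / 10) : ℝ)) ^ 30) ^ 2 ≤ 2 * (c₁ / y ^ ρ₁) * (y ^ (-a)) ^ 2 := by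
  filter_upwards [eventually_mul_rpow_le_rpow (2 * c₁)⁻¹
    (show (-6 : ℝ) < -ρ₁ + -a * 2 by linarith), eventually_gt_atTop 0] with y h_pow hy
  calc ((y ^ (-(1 / 10) : ℝ)) ^ 30) ^ 2 = 2 * c₁ * ((2 * c₁)⁻¹ * y ^ (-6 : ℝ)) := by
        rw [← pow_mul, ← Real.rpow_mul_natCast hy.le, mul_inv_cancel_left₀ (by positivity)]
        norm_num
    _ ≤ 2 * c₁ * y ^ (-ρ₁ + -a * 2) := by gcongr
    _ = 2 * (c₁ / y ^ ρ₁) * (y ^ (-a)) ^ 2 := by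
        rw [Real.rpow_add hy, Real.rpow_mul hy.le, Real.rpow_two, Real.rpow_neg hy.le]
        ring

end ParameterSequences

section GraphSequences

variable {ι : Type*} {l : Filter ι} {V : ι → Type*} [∀ i, Fintype (V i)]
  {G : ∀ i, SimpleGraph (V i)} [∀ i, (G i).LocallyFinite] {d : ι → ℕ} {ε : ι → ℝ}
  {a δ ρ c₁ c₂ ρ₁ : ℝ}

lemma tendsto_card_atTop (hreg : ∀ i, (G i).IsRegularOfDegree (d i))
    (hconn : ∀ i, (G i).Connected) (hd : Tendsto (fun i => (d i : ℝ)) l atTop) :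
    Tendsto (fun i => (Fintype.card (V i) : ℝ)) l atTop := by
  refine tendsto_atTop_mono (fun i => ?_) hd
  obtain ⟨v⟩ := (hconn i).nonempty
  exact mod_cast hreg i v ▸ card_le_univ ((G i).neighborFinset v)

variable [∀ i, DecidableEq (V i)]

lemma eventually_rayleighLEOn_simpleStep_compl (hreg : ∀ i, (G i).IsRegularOfDegree (d i))
    (hconn : ∀ i, (G i).Connected) (hd : Tendsto (fun i => (d i : ℝ)) l atTop)
    (hε : ∀ i, ε i ≤ 1) (hεd : Tendsto (fun i => ε i * Real.log (d i)) l atTop) (hc₁ : 0 < c₁)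
    (hP1 : ∀ i, SpectralGapLB (G i) (d i) (c₁ / (d i : ℝ) ^ ρ₁))
    (hP2a : Tendsto
      (fun i => Real.log (Real.log (Fintype.card (V i))) ^ (2 / ε i) / (d i : ℝ)) l (nhds 0))
    (hP2b : ∀ᶠ i in l,
      (d i : ℝ) ≤ c₂ * (Fintype.card (V i) / Real.log (Fintype.card (V i))) ^ (1 / 5 : ℝ))
    (hρ : 0 < ρ) (hP3 : ∀ i, PropP3 (G i) (d i) (ε i) ρ) (hδ : 0 < δ)
    (ha : 0 < a) (ha' : a ≤ 1 / 10) (haρ : ρ₁ + a < 5) :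
    ∀ᶠ i in l, ∀ S : Finset (V i), #S = ⌈δ * Real.log (Fintype.card (V i))⌉₊ →
      RayleighLEOn (simpleStep (G i) (d i)) (S : Set (V i))ᶜ
        (1 - #S / Fintype.card (V i) * (1 - 6 * (d i : ℝ) ^ (-a))) := by
  have hN := tendsto_card_atTop hreg hconn hd
  filter_upwards [hd.eventually_ge_atTop 1,
    hd.eventually (eventually_mul_rpow_le_rpow 6 (neg_lt_zero.2 ha)),
    (Real.tendsto_log_atTop.comp hN).eventually_gt_atTop 0,
    eventually_layerCount_le_rpow hd hεd hN hP2a,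
    eventually_mul_layerCount_le hρ.le hd hε hεd hN hP2a, eventually_pow_mul_ceil_lt hδ.le hd hN,
    hd.eventually (eventually_rpow_pow_sq_le (a := a) (ρ₁ := ρ₁) hc₁ (by linarith)),
    eventually_ceil_le hδ.le hc₁ haρ hd hN hP2b]
    with i hdi h_eta hlog h_radius h_growth h_near h_iterate h_size S hS
  have hd₀ : (0 : ℝ) < d i := one_pos.trans_le hdi
  have hS_pos : 0 < #S := hS ▸ Nat.ceil_pos.2 (mul_pos hδ hlog)
  rw [Real.rpow_zero] at h_eta
  rw [← hS] at h_near h_size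
  exact rayleighLEOn_simpleStep_compl (hreg i) (mod_cast hd₀) (hconn i) (hP1 i) (by positivity)
    (hP3 i) hρ (card_pos.1 hS_pos) h_radius (by positivity) (by positivity) h_growth h_near
    (by linarith) (Real.rpow_le_rpow_of_exponent_le hdi (by linarith)) h_iterate h_size

end GraphSequences

lemma exponent_le_neg_half_log {N L k κ ε δ η s : ℝ} (hN : 0 < N) (hlog : 0 ≤ Real.log N)
    (hδ : 0 < δ) (hk : δ * Real.log N ≤ k) (hL : 0 ≤ L) (hε : ε ≤ 1) (hη : 0 ≤ η)
    (hηL : 12 * η * L ≤ 1) (hεL : 3 + 2 / δ ≤ ε * L) (hκ : κ = k / N * (1 - 6 * η)) (hκ₀ : 0 ≤ κ)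
    (hs : (1 + ε) * (N * L) ≤ s) :
    3 / 2 * Real.log N + k * (2 + L) + -κ * s ≤ -(1 / 2) * Real.log N := by
  have hk₀ : 0 ≤ k := le_trans (by positivity) hk
  have h_decay : k * (L + ε * L - 1) ≤ κ * s :=
    calc k * (L + ε * L - 1) ≤ k * ((1 + ε) * (1 - 6 * η) * L) := by
          gcongr
          have : (1 + ε) * (6 * η * L) ≤ 2 * (6 * η * L) := by gcongr; linarith
          linarith
      _ = κ * ((1 + ε) * (N * L)) := by
          rw [hκ]
          field_simp
      _ ≤ κ * s := by gcongr
  have h_gain : 2 * Real.log N ≤ k * (ε * L - 3) :=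
    calc 2 * Real.log N = δ * Real.log N * (2 / δ) := by field_simp
      _ ≤ k * (ε * L - 3) := by
          gcongr
          linarith
  linarith

theorem vacant_set_subcritical_general {ι : Type*} {l : Filter ι} {V : ι → Type*}
    [∀ i, Fintype (V i)] [∀ i, DecidableEq (V i)] (G : ∀ i, SimpleGraph (V i))
    [∀ i, (G i).LocallyFinite] (d : ι → ℕ) (ε : ι → ℝ) (u : ∀ i, V i) (t : ι → ℕ)
    (hreg : ∀ i, (G i).IsRegularOfDegree (d i))
    (hconn : ∀ i, (G i).Connected)
    (hd : Tendsto (fun i => (d i : ℝ)) l atTop)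
    (hε : ∀ i, ε i ≤ 1)
    (hεd : Tendsto (fun i => ε i * Real.log (d i)) l atTop)
    (hP1 : ∃ c₁ ρ₁ : ℝ, 0 < c₁ ∧ ρ₁ < 5 ∧
      ∀ i, SpectralGapLB (G i) (d i) (c₁ / (d i : ℝ) ^ ρ₁))
    (hP2a : Tendsto
      (fun i => Real.log (Real.log (Fintype.card (V i))) ^ (2 / ε i) / (d i : ℝ)) l (nhds 0))
    (hP2b : ∃ c₂ : ℝ, ∀ᶠ i in l,
      (d i : ℝ) ≤ c₂ * (Fintype.card (V i) / Real.log (Fintype.card (V i))) ^ (1 / 5 : ℝ))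
    (hP3 : ∃ ρ₂ : ℝ, 0 < ρ₂ ∧ ∀ i, PropP3 (G i) (d i) (ε i) ρ₂)
    (ht : ∀ i, (1 + ε i) * (Fintype.card (V i) * Real.log (d i)) ≤ (t i : ℝ))
    {δ : ℝ} (hδ : 0 < δ) :
    Tendsto (fun i => walkProb (simpleStep (G i) (d i)) (u i) (t i)
      (fun p => bigVacantComponent (G i) p 0 (δ * Real.log (Fintype.card (V i))))) l (nhds 0) := by
  obtain ⟨c₁, ρ₁, hc₁, hρ₁, hP1⟩ := hP1
  obtain ⟨c₂, hP2b⟩ := hP2b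
  obtain ⟨ρ₂, hρ₂, hP3⟩ := hP3
  obtain ⟨a, ha, ha'⟩ := exists_between (lt_min (by norm_num : (0 : ℝ) < 1 / 10) (sub_pos.2 hρ₁))
  obtain ⟨ha_tenth, ha_gap⟩ := lt_min_iff.1 ha'
  have hN := tendsto_card_atTop hreg hconn hd
  have hlog := Real.tendsto_log_atTop.comp hN
  have h_lim : Tendsto (fun i => Real.exp (-(1 / 2) * Real.log (Fintype.card (V i)))) l (nhds 0) :=
    Real.tendsto_exp_atBot.comp (hlog.const_mul_atTop_of_neg (by norm_num))
  refine tendsto_of_tendsto_of_tendsto_of_le_of_le' tendsto_const_nhds h_lim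
    (Eventually.of_forall fun i => walkProb_nonneg (simpleStep_nonneg _ _) _ _ _) ?_
  filter_upwards [hd.eventually_ge_atTop 2, hN.eventually_gt_atTop 0, hlog.eventually_gt_atTop 0,
    hd.eventually (eventually_mul_rpow_le_rpow 6 (neg_lt_zero.2 ha)),
    hd.eventually (eventually_mul_rpow_neg_mul_log_le_one 12 ha),
    hεd.eventually_ge_atTop (3 + 2 / δ),
    eventually_rayleighLEOn_simpleStep_compl hreg hconn hd hε hεd hc₁ hP1 hP2a hP2b hρ₂ hP3 hδ ha
      ha_tenth.le (by linarith)] with i hdi hNi hlogi h_eta h_eta_log h_eps h_rayleigh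
  rw [Real.rpow_zero] at h_eta
  refine (walkProb_bigVacantComponent_le (hreg i) (mod_cast hdi) (mul_pos hδ hlogi)
    (fun S hS => hS ▸ h_rayleigh S hS) (u i) (t i)).trans ?_
  rw [mul_pow_mul_exp_mul_sqrt_eq hNi (by linarith)]
  exact Real.exp_le_exp.2 <| exponent_le_neg_half_log hNi hlogi.le hδ (Nat.le_ceil _)
    (Real.log_nonneg (by linarith)) (hε i) (by positivity) h_eta_log h_eps rfl
    (mul_nonneg (by positivity) (by linarith)) (ht i)

/-- **Theorem 1(b)**: for a sequence of connected `d`-regular graphs satisfying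
P1–P3, if `t ≥ (1+ε) n ln d` then w.h.p. the vacant set of the first `t` steps
of the simple random walk induces no component with `δ log n` or more vertices.
(The `n`-th graph of the sequence has `n + 1` vertices.) -/
theorem vacant_set_subcritical
    (G : ∀ n : ℕ, SimpleGraph (Fin (n + 1))) (d : ℕ → ℕ) (ε : ℕ → ℝ)
    (u : ∀ n : ℕ, Fin (n + 1)) (t : ℕ → ℕ)
    (hreg : ∀ n, (G n).IsRegularOfDegree (d n))
    (hconn : ∀ n, (G n).Connected)
    (hd : Tendsto (fun n => (d n : ℝ)) atTop atTop)
    (hε : ∀ n, 0 < ε n ∧ ε n < 1)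
    (hεd : Tendsto (fun n => ε n * Real.log (d n)) atTop atTop)
    (hP1 : ∃ c₁ ρ₁ : ℝ, 0 < c₁ ∧ 0 < ρ₁ ∧ ρ₁ ≤ 3 ∧
      ∀ n, SpectralGapLB (G n) (d n) (c₁ / (d n : ℝ) ^ ρ₁))
    (hP2a : Tendsto (fun n : ℕ => Real.log (Real.log ((n : ℝ) + 1)) ^ (2 / ε n) / (d n : ℝ))
      atTop (nhds 0))
    (hP2b : ∃ c₂ : ℝ, 0 < c₂ ∧ ∀ n, 1 ≤ n →
      (d n : ℝ) ≤ c₂ * (((n : ℝ) + 1) / Real.log ((n : ℝ) + 1)) ^ ((1 : ℝ) / 5))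
    (hP3 : ∃ ρ₂ : ℝ, 0 < ρ₂ ∧ ∀ n, PropP3 (G n) (d n) (ε n) ρ₂)
    (ht : ∀ n, (1 + ε n) * (((n : ℝ) + 1) * Real.log (d n)) ≤ (t n : ℝ)) :
    ∀ δ : ℝ, 0 < δ →
      Tendsto (fun n =>
        walkProb (simpleStep (G n) (d n)) (u n) (t n)
          (fun p => bigVacantComponent (G n) p 0 (δ * Real.log ((n : ℝ) + 1))))
        atTop (nhds 0) := by
  intro δ hδ
  obtain ⟨c₁, ρ₁, hc₁, -, hρ₁, hP1⟩ := hP1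
  obtain ⟨c₂, -, hP2b⟩ := hP2b
  have h_card (n : ℕ) : (n : ℝ) + 1 = Fintype.card (Fin (n + 1)) := by simp
  simp only [h_card] at hP2a hP2b ht ⊢
  exact vacant_set_subcritical_general G d ε u t hreg hconn hd (fun n => (hε n).2.le) hεd
    ⟨c₁, ρ₁, hc₁, by linarith, hP1⟩ hP2a ⟨c₂, (eventually_ge_atTop 1).mono hP2b⟩ hP3 ht hδ

end
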